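/- arXiv:1610.08483 — 2 statements merged into one kernel-verified Lean document; each statement's English description precedes it below -/
import Mathlib

section
/- Let Γ be a group and let ρ₁, ρ₂ : Γ → PSL(2,ℝ) be group homomorphisms. Assume that ρ₁(Γ) is non-elementary and not discrete, and that rot(ρ₁(γ)) = rot(ρ₂(γ)) for every γ ∈ Γ. Then |tr(ρ₁(γ))| = |tr(ρ₂(γ))| for every γ ∈ Γ. -/
/-!
`PSL2R` is `PSL(2,ℝ) = SL(2,ℝ)/{±1}`, realized as the quotient of `SL(2,ℝ)` by its center.
-/

open Matrix Real

noncomputable section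

/-- `SL(2,ℝ)`. -/
abbrev SL2R := Matrix.SpecialLinearGroup (Fin 2) ℝ

/-- The topology on `SL(2,ℝ)` induced from the space of matrices. -/
instance : TopologicalSpace SL2R :=
  TopologicalSpace.induced (fun g => (g : Matrix (Fin 2) (Fin 2) ℝ)) inferInstance

/-- `PSL(2,ℝ) = SL(2,ℝ)/{±1}`, the quotient of `SL(2,ℝ)` by its center. -/
abbrev PSL2R := SL2R ⧸ Subgroup.center SL2R

/-- The rotation matrix `R(θ) = [[cos θ, sin θ], [-sin θ, cos θ]]`, as an element of `SL(2,ℝ)`. -/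
def rotMat (θ : ℝ) : SL2R :=
  ⟨!![Real.cos θ, Real.sin θ; -Real.sin θ, Real.cos θ], by
    simp [Matrix.det_fin_two_of]
    ring_nf
    nlinarith [Real.sin_sq_add_cos_sq θ]⟩

/-- The absolute value of the trace, well defined on `PSL(2,ℝ)`. -/
def absTrace (A : PSL2R) : ℝ :=
  |Matrix.trace ((Quotient.out A : SL2R) : Matrix (Fin 2) (Fin 2) ℝ)|

/-- An element of `PSL(2,ℝ)` is elliptic if `|tr| < 2`. -/
def IsElliptic (A : PSL2R) : Prop := absTrace A < 2

/-- The rotation number of an element of `PSL(2,ℝ)`, in `ℝ/2πℤ`: it is `2θ` if the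
element is conjugate to the class of `R(θ)` with `θ ∈ (0,π)` (i.e. elliptic), and `0`
otherwise (hyperbolic, parabolic, identity). -/
def rot (A : PSL2R) : AddCircle (2 * π) :=
  open Classical in
  if h : ∃ θ ∈ Set.Ioo (0:ℝ) π, IsConj (QuotientGroup.mk (rotMat θ) : PSL2R) A then
    ((2 * h.choose : ℝ) : AddCircle (2 * π))
  else 0

/-- A subgroup of `PSL(2,ℝ)` is discrete if it is a discrete subset of the
topological group `PSL(2,ℝ)`. -/
def IsDiscreteSubgroup (G : Subgroup PSL2R) : Prop := DiscreteTopology G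

/-- The boundary circle `∂ℍ² = ℝ ∪ {∞}`, realized as the real projective line. -/
def Boundary := Projectivization ℝ (Fin 2 → ℝ)

/-- An element of `SL(2,ℝ)`, viewed as an invertible matrix. -/
def slInvertible (g : SL2R) : Invertible (g : Matrix (Fin 2) (Fin 2) ℝ) :=
  haveI : Invertible (g : Matrix (Fin 2) (Fin 2) ℝ).det := by rw [g.prop]; exact invertibleOne
  Matrix.invertibleOfDetInvertible _

/-- The (Möbius) action of `SL(2,ℝ)` on the boundary circle `∂ℍ² = ℝP¹`. -/
def boundaryAct (g : SL2R) (p : Boundary) : Boundary :=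
  Projectivization.map
    ((Matrix.toLinearEquiv' (g : Matrix (Fin 2) (Fin 2) ℝ) (slInvertible g)) :
      (Fin 2 → ℝ) →ₗ[ℝ] (Fin 2 → ℝ))
    (Matrix.toLinearEquiv' (g : Matrix (Fin 2) (Fin 2) ℝ) (slInvertible g)).injective p

/-- A subgroup of `PSL(2,ℝ)` is elementary if it has a finite orbit in `ℍ² ∪ ∂ℍ²`:
either the orbit of some point of the hyperbolic plane `ℍ²` is finite, or the orbit of some
point of the boundary circle `∂ℍ²` is finite. (The action of a class in `PSL(2,ℝ)` is
computed via representatives in `SL(2,ℝ)`; the center acts trivially.) -/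
def IsElementary (G : Subgroup PSL2R) : Prop :=
  (∃ z : UpperHalfPlane,
    Set.Finite {w : UpperHalfPlane | ∃ g : SL2R, (QuotientGroup.mk g : PSL2R) ∈ G ∧ g • z = w}) ∨
  (∃ p : Boundary,
    Set.Finite {q : Boundary | ∃ g : SL2R, (QuotientGroup.mk g : PSL2R) ∈ G ∧ boundaryAct g p = q})

end

open NormedSpace in
theorem aux_exp_nhds {𝔸 : Type*} [NormedRing 𝔸] [NormedAlgebra ℝ 𝔸] [CompleteSpace 𝔸] :
    Filter.map (NormedSpace.exp : 𝔸 → 𝔸) (nhds 0) = nhds 1 := by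
  have := (hasStrictFDerivAt_exp_zero (𝕂 := ℝ) (𝔸 := 𝔸)).map_nhds_eq_of_surj (by
    ext x; simp)
  simpa using this

open NormedSpace Filter Topology in
theorem aux_one_param {𝔸 : Type*} [NormedRing 𝔸] [NormedAlgebra ℝ 𝔸] [FiniteDimensional ℝ 𝔸]
    (K : Submonoid 𝔸) (hK : IsClosed (K : Set 𝔸))
    (h : ∀ ε > 0, ∃ u v : 𝔸, u ≠ 1 ∧ ‖u - 1‖ < ε ∧ u ∈ K ∧ v ∈ K ∧ v * u = 1) :
    ∃ X : 𝔸, X ≠ 0 ∧ ∀ t : ℝ, NormedSpace.exp (t • X) ∈ K := by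
  have : CompleteSpace 𝔸 := FiniteDimensional.complete ℝ 𝔸
  have : ProperSpace 𝔸 := FiniteDimensional.proper_real 𝔸
  let : NormedAlgebra ℚ 𝔸 := NormedAlgebra.restrictScalars ℚ ℝ 𝔸
  have h1 : ∀ n : ℕ, ∃ Z : 𝔸, Z ≠ 0 ∧ ‖Z‖ < 1 / ((n : ℝ) + 1) ∧ NormedSpace.exp Z ∈ K ∧ NormedSpace.exp (-Z) ∈ K := by
    intro n
    have hb : Metric.ball (0 : 𝔸) (1 / ((n : ℝ) + 1)) ∈ 𝓝 (0 : 𝔸) :=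
      Metric.ball_mem_nhds _ (by positivity)
    have hi : NormedSpace.exp '' Metric.ball (0 : 𝔸) (1 / ((n : ℝ) + 1)) ∈ 𝓝 (1 : 𝔸) := by
      rw [← aux_exp_nhds]; exact image_mem_map hb
    obtain ⟨ε, hε, hsub⟩ := Metric.mem_nhds_iff.1 hi
    obtain ⟨u, v, hu1, hue, huK, hvK, huv⟩ := h ε hε
    obtain ⟨Z, hZ, rfl⟩ := hsub (show u ∈ Metric.ball 1 ε by simpa [dist_eq_norm] using hue)
    refine ⟨Z, ?_, by simpa using hZ, huK, ?_⟩
    · rintro rfl; simp at hu1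
    · have e1 : NormedSpace.exp Z * NormedSpace.exp (-Z) = 1 := by
        rw [← NormedSpace.exp_add_of_commute (Commute.neg_right (Commute.refl Z))]; simp
      have : NormedSpace.exp (-Z) = v := by
        calc NormedSpace.exp (-Z) = (v * NormedSpace.exp Z) * NormedSpace.exp (-Z) := by rw [huv, one_mul]
          _ = v := by rw [mul_assoc, e1, mul_one]
      rwa [this]
  choose Z hZ0 hZn hZK hZK' using h1
  have hpos : ∀ n, 0 < ‖Z n‖ := fun n => norm_pos_iff.2 (hZ0 n)
  have hsph : ∀ n, ‖Z n‖⁻¹ • Z n ∈ Metric.sphere (0 : 𝔸) 1 := by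
    intro n
    simp [norm_smul, (hpos n).ne']
  obtain ⟨X, hX, φ, hφ, hlim⟩ := (isCompact_sphere (0 : 𝔸) 1).tendsto_subseq hsph
  refine ⟨X, ?_, fun t => ?_⟩
  · rintro rfl; simp at hX
  have hZint : ∀ (k : ℤ) n, NormedSpace.exp ((k : ℝ) • Z n) ∈ K := by
    intro k n
    obtain ⟨m, rfl | rfl⟩ := k.eq_nat_or_neg
    · have : (((m : ℤ) : ℝ) • Z n) = m • Z n := by simp [Nat.cast_smul_eq_nsmul]
      rw [this, NormedSpace.exp_nsmul]; exact K.pow_mem (hZK n) m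
    · have : (((-(m : ℤ) : ℤ) : ℝ) • Z n) = m • (- Z n) := by simp [Nat.cast_smul_eq_nsmul]
      rw [this, NormedSpace.exp_nsmul]; exact K.pow_mem (hZK' n) m
  have hZlim : Tendsto (fun n => ‖Z (φ n)‖) atTop (𝓝 0) := by
    have : Tendsto (fun n => ‖Z n‖) atTop (𝓝 0) :=
      squeeze_zero (fun n => norm_nonneg _) (fun n => (hZn n).le) tendsto_one_div_add_atTop_nhds_zero_nat
    exact this.comp hφ.tendsto_atTop
  have hk : Tendsto (fun n => (⌊t / ‖Z (φ n)‖⌋ : ℝ) * ‖Z (φ n)‖) atTop (𝓝 t) := by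
    rw [tendsto_iff_dist_tendsto_zero]
    refine squeeze_zero (fun n => dist_nonneg) (fun n => ?_) hZlim
    have hp := hpos (φ n)
    have a1 := Int.floor_le (t / ‖Z (φ n)‖)
    have a2 := Int.lt_floor_add_one (t / ‖Z (φ n)‖)
    rw [le_div_iff₀ hp] at a1
    rw [div_lt_iff₀ hp] at a2
    rw [Real.dist_eq, abs_le]
    constructor <;> nlinarith
  have hl := hk.smul hlim
  have hl2 := ((NormedSpace.exp_continuous (𝔸 := 𝔸)).tendsto (t • X)).comp hl
  refine hK.mem_of_tendsto hl2 (Eventually.of_forall fun n => ?_)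
  have := hZint ⌊t / ‖Z (φ n)‖⌋ (φ n)
  simp only [Function.comp, smul_smul]
  rw [mul_assoc, mul_inv_cancel₀ (hpos _).ne', mul_one]
  exact this

open NormedSpace Filter Topology in
/-- products of four one-parameter families in spanning directions cover a neighbourhood. -/
theorem aux_cover {𝔸 : Type*} [NormedRing 𝔸] [NormedAlgebra ℝ 𝔸] [FiniteDimensional ℝ 𝔸]
    (K : Submonoid 𝔸) (Y : Fin 4 → 𝔸) (hY : Submodule.span ℝ (Set.range Y) = ⊤)
    (h : ∀ i, ∀ t : ℝ, NormedSpace.exp (t • Y i) ∈ K) : (K : Set 𝔸) ∈ 𝓝 (1 : 𝔸) := by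
  have : CompleteSpace 𝔸 := FiniteDimensional.complete ℝ 𝔸
  have key : ∀ i, HasStrictFDerivAt (fun t : Fin 4 → ℝ => NormedSpace.exp (t i • Y i))
      ((ContinuousLinearMap.proj (R := ℝ) (φ := fun _ : Fin 4 => ℝ) i).smulRight (Y i)) 0 := by
    intro i
    have h1 : HasStrictFDerivAt (fun t : Fin 4 → ℝ => t i • Y i)
      ((ContinuousLinearMap.proj (R := ℝ) (φ := fun _ : Fin 4 => ℝ) i).smulRight (Y i)) 0 :=
      ((ContinuousLinearMap.proj (R := ℝ) (φ := fun _ : Fin 4 => ℝ) i).smulRight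
        (Y i)).hasStrictFDerivAt
    have h2 : HasStrictFDerivAt (NormedSpace.exp : 𝔸 → 𝔸) (1 : 𝔸 →L[ℝ] 𝔸) ((fun t : Fin 4 → ℝ => t i • Y i) 0) := by
      simpa using hasStrictFDerivAt_exp_zero (𝕂 := ℝ) (𝔸 := 𝔸)
    exact h2.comp (0 : Fin 4 → ℝ) h1
  have hprod := (((key 0).mul' (key 1)).mul' (key 2)).mul' (key 3)
  have := hprod.map_nhds_eq_of_surj (by
    rw [eq_top_iff]
    rintro x -
    have hx : x ∈ Submodule.span ℝ (Set.range Y) := by rw [hY]; trivial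
    obtain ⟨c, hc⟩ := (Submodule.mem_span_range_iff_exists_fun ℝ).1 hx
    refine ⟨c, ?_⟩
    rw [← hc, Fin.sum_univ_four]
    simp
    abel)
  simp only [Pi.mul_apply, Pi.zero_apply, zero_smul, NormedSpace.exp_zero, mul_one] at this
  rw [← this, mem_map]
  refine Filter.Eventually.of_forall fun t => ?_
  exact K.mul_mem (K.mul_mem (K.mul_mem (h 0 _) (h 1 _)) (h 2 _)) (h 3 _)

/-- the stabilisation argument. -/
theorem aux_span {H E : Type*} [Group H] [Ring E] [Algebra ℝ E] [FiniteDimensional ℝ E]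
    (R : H →* E) (S : ℝ → Set H) (hmono : ∀ a b, a ≤ b → S a ⊆ S b)
    (hmul : ∀ a > 0, ∃ b > 0, ∀ x ∈ S b, ∀ y ∈ S b, x * y ∈ S a)
    (hone : ∀ a > 0, (1 : H) ∈ S a)
    (hgen : ∀ a > 0, Submonoid.closure (S a) = ⊤) :
    ∃ a > 0, ∀ b > 0, b ≤ a → ∀ h : H, R h ∈ Submodule.span ℝ (R '' S b) := by
  classical
  -- choose the minimal dimension
  let d : ℝ → ℕ := fun a => Module.finrank ℝ (Submodule.span ℝ (R '' S a))
  have hex : ∃ n, ∃ a > 0, d a = n := ⟨_, 1, one_pos, rfl⟩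
  obtain ⟨a, ha, hda⟩ := Nat.find_spec hex
  have hmin : ∀ b > 0, d a ≤ d b := fun b hb => by
    rw [hda]; exact Nat.find_min' hex ⟨b, hb, rfl⟩
  have heq : ∀ b > 0, b ≤ a → Submodule.span ℝ (R '' S b) = Submodule.span ℝ (R '' S a) := by
    intro b hb hba
    exact Submodule.eq_of_le_of_finrank_le
      (Submodule.span_mono (Set.image_mono (hmono _ _ hba))) (hmin b hb)
  set L := Submodule.span ℝ (R '' S a) with hL
  obtain ⟨b, hb, hbb⟩ := hmul a ha
  have hLb : Submodule.span ℝ (R '' S (min a b)) = L := heq _ (lt_min ha hb) (min_le_left _ _)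
  have hLL : ∀ x ∈ L, ∀ y ∈ L, x * y ∈ L := by
    intro x hx y hy
    have : x * y ∈ L * L := Submodule.mul_mem_mul hx hy
    rw [← hLb, Submodule.span_mul_span] at this
    refine Submodule.span_mono ?_ this
    rintro _ ⟨_, ⟨p, hp, rfl⟩, _, ⟨q, hq, rfl⟩, rfl⟩
    exact ⟨p * q, hbb p (hmono _ _ (min_le_right _ _) hp) q (hmono _ _ (min_le_right _ _) hq),
      by simp⟩
  have h1 : ∀ h : H, (∀ x ∈ L, R h * x ∈ L) := by
    intro h
    have : h ∈ Submonoid.closure (S a) := by rw [hgen a ha]; trivial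
    induction this using Submonoid.closure_induction with
    | mem x hx => exact fun y hy => hLL _ (Submodule.subset_span ⟨x, hx, rfl⟩) _ hy
    | one => simp
    | mul x y _ _ hx hy => intro z hz; rw [map_mul, mul_assoc]; exact hx _ (hy _ hz)
  refine ⟨a, ha, fun c hc hca h => ?_⟩
  rw [heq c hc hca]
  have := h1 h (R 1) (Submodule.subset_span ⟨1, hone a ha, rfl⟩)
  rwa [← map_mul, mul_one] at this
theorem aux_quad {R : Type*} [CommRing R] {x y z w a b c d k u v : R}
    (e00 : a * x + b * z = k * (x * a + y * c)) (e01 : a * y + b * w = k * (x * b + y * d))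
    (e10 : c * x + d * z = k * (z * a + w * c)) (e11 : c * y + d * w = k * (z * b + w * d))
    (hdet : a * d - b * c = 1) :
    k * ((a * u + b * v) * (z * (a * u + b * v) + w * (c * u + d * v))
      - (c * u + d * v) * (x * (a * u + b * v) + y * (c * u + d * v)))
      = u * (z * u + w * v) - v * (x * u + y * v) := by
  linear_combination (a * u + b * v) * (-(e10 * u + e11 * v)) + (c * u + d * v) * (e00 * u + e01 * v)
    + (u * (z * u + w * v) - v * (x * u + y * v)) * hdet

theorem aux_finite_lines (x y z w : ℝ) (hw : x + w = 0) (hne : ¬ (x = 0 ∧ y = 0 ∧ z = 0)) :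
    Set.Finite {p : Boundary | ∃ (u : Fin 2 → ℝ) (hu : u ≠ 0), p = Projectivization.mk ℝ u hu ∧
      u 0 * (z * u 0 + w * u 1) - u 1 * (x * u 0 + y * u 1) = 0} := by
  have hfin : Set.Finite {t : ℝ | z * t ^ 2 - 2 * x * t - y = 0} := by
    have hp : (Polynomial.C z * Polynomial.X ^ 2 + Polynomial.C (-(2 * x)) * Polynomial.X
        + Polynomial.C (-y)) ≠ (0 : Polynomial ℝ) := by
      intro h
      apply hne
      have h0 := congrArg (fun p => p.coeff 0) h
      have h1 := congrArg (fun p => p.coeff 1) h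
      have h2 := congrArg (fun p => p.coeff 2) h
      simp [Polynomial.coeff_X, Polynomial.coeff_C] at h0 h1 h2
      exact ⟨h1, h0, h2⟩
    refine (Polynomial.finite_setOfPred_isRoot hp).subset fun t ht => ?_
    simp only [Set.mem_ofPred_eq, Polynomial.IsRoot] at ht ⊢
    simp
    linarith
  have hne1 : ∀ t : ℝ, (![t, 1] : Fin 2 → ℝ) ≠ 0 := fun t h => by simpa using congrFun h 1
  have hne0 : (![1, 0] : Fin 2 → ℝ) ≠ 0 := fun h => by simpa using congrFun h 0
  refine ((hfin.image (fun t => (Projectivization.mk ℝ _ (hne1 t) : Boundary))).insert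
    (Projectivization.mk ℝ _ hne0 : Boundary)).subset ?_
  rintro p ⟨u, hu, rfl, hq⟩
  by_cases h1 : u 1 = 0
  · left
    refine (Projectivization.mk_eq_mk_iff' ℝ _ _ _ _).2 ⟨u 0, ?_⟩
    ext i; fin_cases i <;> simp [h1]
  · right
    refine ⟨u 0 / u 1, ?_, ?_⟩
    · simp only [Set.mem_ofPred_eq]
      field_simp
      have : w = -x := by linarith
      subst this
      linarith
    · refine (Projectivization.mk_eq_mk_iff' ℝ _ _ _ _).2 ⟨(u 1)⁻¹, ?_⟩
      ext i; fin_cases i <;> simp [h1]; field_simp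

theorem aux_boundaryAct (g : SL2R) (u : Fin 2 → ℝ) (hu : u ≠ 0) :
    ∃ hv, boundaryAct g (Projectivization.mk ℝ u hu) =
      Projectivization.mk ℝ ((g : Matrix (Fin 2) (Fin 2) ℝ) *ᵥ u) hv := by
  unfold boundaryAct
  refine ⟨?_, ?_⟩
  swap
  · rw [Projectivization.map_mk]; rfl

theorem aux_elem (G : Subgroup PSL2R) (Y : Matrix (Fin 2) (Fin 2) ℝ) (hY : Y ≠ 0)
    (htr : Y 0 0 + Y 1 1 = 0)
    (h : ∀ g : SL2R, (QuotientGroup.mk g : PSL2R) ∈ G →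
      ∃ c : ℝ, (g : Matrix (Fin 2) (Fin 2) ℝ) * Y = c • (Y * g)) : IsElementary G := by
  have h' : ∀ g : SL2R, (QuotientGroup.mk g : PSL2R) ∈ G → ∃ k : ℝ, k ≠ 0 ∧
      g 0 0 * Y 0 0 + g 0 1 * Y 1 0 = k * (Y 0 0 * g 0 0 + Y 0 1 * g 1 0) ∧
      g 0 0 * Y 0 1 + g 0 1 * Y 1 1 = k * (Y 0 0 * g 0 1 + Y 0 1 * g 1 1) ∧
      g 1 0 * Y 0 0 + g 1 1 * Y 1 0 = k * (Y 1 0 * g 0 0 + Y 1 1 * g 1 0) ∧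
      g 1 0 * Y 0 1 + g 1 1 * Y 1 1 = k * (Y 1 0 * g 0 1 + Y 1 1 * g 1 1) := by
    intro g hg
    obtain ⟨c, hc⟩ := h g hg
    refine ⟨c, ?_, ?_, ?_, ?_, ?_⟩
    · rintro rfl
      rw [zero_smul] at hc
      apply hY
      have : ((g⁻¹ * g : SL2R) : Matrix (Fin 2) (Fin 2) ℝ) * Y = 0 := by
        rw [Matrix.SpecialLinearGroup.coe_mul, Matrix.mul_assoc, hc, Matrix.mul_zero]
      simpa using this
    · simpa [Matrix.mul_apply, Fin.sum_univ_two] using congrFun (congrFun hc 0) 0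
    · simpa [Matrix.mul_apply, Fin.sum_univ_two] using congrFun (congrFun hc 0) 1
    · simpa [Matrix.mul_apply, Fin.sum_univ_two] using congrFun (congrFun hc 1) 0
    · simpa [Matrix.mul_apply, Fin.sum_univ_two] using congrFun (congrFun hc 1) 1
  have hdet : ∀ g : SL2R, g 0 0 * g 1 1 - g 0 1 * g 1 0 = 1 := fun g => by
    rw [← Matrix.det_fin_two]; exact g.prop
  have hne : ¬ (Y 0 0 = 0 ∧ Y 0 1 = 0 ∧ Y 1 0 = 0) := by
    rintro ⟨a, b, c⟩
    apply hY
    ext i j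
    fin_cases i <;> fin_cases j <;> simp [a, b, c]
    linarith
  generalize Y 0 0 = x at *
  generalize Y 0 1 = y at *
  generalize Y 1 0 = z at *
  generalize Y 1 1 = w at *
  obtain rfl : w = -x := by linarith
  rcases le_or_gt 0 (x ^ 2 + y * z) with hD | hD
  · right
    obtain ⟨v, hv, hq⟩ : ∃ v : Fin 2 → ℝ, v ≠ 0 ∧
        v 0 * (z * v 0 + (-x) * v 1) - v 1 * (x * v 0 + y * v 1) = 0 := by
      by_cases hz : z = 0
      · refine ⟨![1, 0], fun h => by simpa using congrFun h 0, ?_⟩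
        simp [hz]
      · refine ⟨![x + √(x ^ 2 + y * z), z], fun h => hz (by simpa using congrFun h 1), ?_⟩
        have := Real.sq_sqrt hD
        simp
        linear_combination z * this
    refine ⟨Projectivization.mk ℝ v hv, (aux_finite_lines x y z (-x) (by ring) hne).subset ?_⟩
    rintro q ⟨g, hg, rfl⟩
    obtain ⟨hv', e⟩ := aux_boundaryAct g v hv
    refine ⟨_, hv', e, ?_⟩
    obtain ⟨k, hk, e00, e01, e10, e11⟩ := h' g hg
    have := aux_quad (u := v 0) (v := v 1) e00 e01 e10 e11 (hdet g)
    rw [hq] at this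
    have := (mul_eq_zero.1 this).resolve_left hk
    simpa [Matrix.mulVec, dotProduct, Fin.sum_univ_two] using this
  · left
    have hz : z ≠ 0 := by rintro rfl; nlinarith [sq_nonneg x]
    have hs : 0 < √(-(x ^ 2 + y * z)) := Real.sqrt_pos.2 (by linarith)
    have hs2 := Real.sq_sqrt (show 0 ≤ -(x ^ 2 + y * z) by linarith)
    set s := √(-(x ^ 2 + y * z)) with hsdef
    let τ : UpperHalfPlane := ⟨⟨x / z, s / |z|⟩, by
      have := abs_pos.2 hz
      show 0 < s / |z|
      positivity⟩
    have hτ : (z : ℂ) * (τ : ℂ) ^ 2 - 2 * x * τ - y = 0 := by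
      have : (τ : ℂ) = ⟨x / z, s / |z|⟩ := rfl
      rw [this]
      apply Complex.ext
      · simp [pow_two]
        have h2 : s / |z| * (s / |z|) = s ^ 2 / z ^ 2 := by
          rw [← sq_abs z]; field_simp
        rw [h2, hs2]
        field_simp
        ring
      · simp [pow_two]
        field_simp
        ring
    refine ⟨τ, (Set.finite_singleton τ).subset ?_⟩
    rintro _ ⟨g, hg, rfl⟩
    obtain ⟨k, hk, e00, e01, e10, e11⟩ := h' g hg
    have hd := hdet g
    have hw := UpperHalfPlane.coe_specialLinearGroup_apply g τ
    simp only [Algebra.algebraMap_self, RingHom.id_apply] at hw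
    have hden : (g 1 0 : ℂ) * τ + (g 1 1 : ℂ) ≠ 0 := by
      intro h0
      rw [h0, div_zero] at hw
      exact UpperHalfPlane.ne_zero _ hw
    have key := aux_quad (R := ℂ) (x := x) (y := y) (z := z) (w := ((-x : ℝ) : ℂ)) (k := k)
      (a := g 0 0) (b := g 0 1) (c := g 1 0) (d := g 1 1) (u := τ) (v := 1)
      (by exact_mod_cast e00) (by exact_mod_cast e01) (by exact_mod_cast e10)
      (by exact_mod_cast e11) (by exact_mod_cast hd)
    have hwm : ((g • τ : UpperHalfPlane) : ℂ) * ((g 1 0 : ℂ) * τ + (g 1 1 : ℂ)) =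
        (g 0 0 : ℂ) * τ + (g 0 1 : ℂ) := by
      rw [hw]; exact div_mul_cancel₀ _ hden
    set W := g • τ with hW
    have hkC : (k : ℂ) ≠ 0 := by exact_mod_cast hk
    have hWq : (z : ℂ) * (W : ℂ) ^ 2 - 2 * x * W - y = 0 := by
      have h3 : (k : ℂ) * ((g 1 0 : ℂ) * τ + (g 1 1 : ℂ)) ^ 2 *
          ((z : ℂ) * (W : ℂ) ^ 2 - 2 * x * W - y) = 0 := by
        rw [mul_one, mul_one, ← hwm] at key
        push_cast at key
        linear_combination key + hτ
      exact (mul_eq_zero.1 h3).resolve_left (mul_ne_zero hkC (pow_ne_zero _ hden))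
    have hf : ((W : ℂ) - τ) * (z * ((W : ℂ) + τ) - 2 * x) = 0 := by
      linear_combination hWq - hτ
    rw [Set.mem_singleton_iff]
    rcases mul_eq_zero.1 hf with h4 | h4
    · exact UpperHalfPlane.ext (sub_eq_zero.1 h4)
    · exfalso
      have h5 := congrArg Complex.im h4
      simp at h5
      rcases h5 with h5 | h5
      · exact hz h5
      · have := W.im_pos
        have := τ.im_pos
        linarith
theorem aux_cross {y0 y1 y2 v0 v1 v2 a0 a1 a2 c0 c1 c2 : ℝ}
    (h1 : y0 * a0 + y1 * a1 + y2 * a2 = 0) (h2 : v0 * a0 + v1 * a1 + v2 * a2 = 0)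
    (h3 : y0 * c0 + y1 * c1 + y2 * c2 = 0) (h4 : v0 * c0 + v1 * c1 + v2 * c2 = 0)
    (hn : ¬ (y1 * v2 - y2 * v1 = 0 ∧ y2 * v0 - y0 * v2 = 0 ∧ y0 * v1 - y1 * v0 = 0)) :
    a1 * c2 - a2 * c1 = 0 ∧ a2 * c0 - a0 * c2 = 0 ∧ a0 * c1 - a1 * c0 = 0 := by
  obtain ⟨n0, hn0⟩ : ∃ n, n = y1 * v2 - y2 * v1 := ⟨_, rfl⟩
  obtain ⟨n1, hn1⟩ : ∃ n, n = y2 * v0 - y0 * v2 := ⟨_, rfl⟩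
  obtain ⟨n2, hn2⟩ : ∃ n, n = y0 * v1 - y1 * v0 := ⟨_, rfl⟩
  have A0 : n1 * a2 - n2 * a1 = 0 := by rw [hn1, hn2]; linear_combination v0 * h1 - y0 * h2
  have A1 : n2 * a0 - n0 * a2 = 0 := by rw [hn0, hn2]; linear_combination v1 * h1 - y1 * h2
  have A2 : n0 * a1 - n1 * a0 = 0 := by rw [hn0, hn1]; linear_combination v2 * h1 - y2 * h2
  have C0 : n1 * c2 - n2 * c1 = 0 := by rw [hn1, hn2]; linear_combination v0 * h3 - y0 * h4
  have C1 : n2 * c0 - n0 * c2 = 0 := by rw [hn0, hn2]; linear_combination v1 * h3 - y1 * h4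
  have C2 : n0 * c1 - n1 * c0 = 0 := by rw [hn0, hn1]; linear_combination v2 * h3 - y2 * h4
  rw [← hn0, ← hn1, ← hn2] at hn
  clear hn0 hn1 hn2 h1 h2 h3 h4
  by_cases z0 : n0 = 0
  · by_cases z1 : n1 = 0
    · have z2 : n2 ≠ 0 := fun z2 => hn ⟨z0, z1, z2⟩
      subst z0 z1
      simp [z2] at A0 A1 C0 C1
      simp [A0, A1, C0, C1]
    · refine ⟨mul_left_cancel₀ z1 ?_, mul_left_cancel₀ z1 ?_, mul_left_cancel₀ z1 ?_⟩
      · linear_combination a1 * C0 - c1 * A0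
      · linear_combination c0 * A0 - a0 * C0 + a1 * C1 - c1 * A1 + (a1 * c2 - c1 * a2) * z0
      · linear_combination a1 * C2 - c1 * A2
  · refine ⟨mul_left_cancel₀ z0 ?_, mul_left_cancel₀ z0 ?_, mul_left_cancel₀ z0 ?_⟩
    · linear_combination c2 * A2 + c1 * A1 + a0 * C0
    · linear_combination a0 * C1 - c0 * A1
    · linear_combination a0 * C2 - c0 * A2
/-- If a traceless matrix has conjugates that do not span together with `1`, then `G` is
elementary. -/
theorem aux_conj_span (G : Subgroup PSL2R) (hG : ¬ IsElementary G)
    (X : Matrix (Fin 2) (Fin 2) ℝ) (hX : X ≠ 0) (htr : X 0 0 + X 1 1 = 0) :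
    Submodule.span ℝ ({1} ∪ {Z : Matrix (Fin 2) (Fin 2) ℝ | ∃ g : SL2R,
      (QuotientGroup.mk g : PSL2R) ∈ G ∧
        Z = (g : Matrix (Fin 2) (Fin 2) ℝ) * X * ((g⁻¹ : SL2R) : Matrix (Fin 2) (Fin 2) ℝ)}) = ⊤ := by
  by_contra hne
  obtain ⟨φ, hφ, hker⟩ := Submodule.exists_le_ker_of_lt_top _ (lt_top_iff_ne_top.2 hne)
  -- the dual matrix
  let Y : Matrix (Fin 2) (Fin 2) ℝ := fun i j => φ (Matrix.single j i 1)
  have hφY : ∀ M : Matrix (Fin 2) (Fin 2) ℝ, φ M = (Y * M).trace := by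
    intro M
    conv_lhs => rw [Matrix.matrix_eq_sum_single M]
    have hYd : ∀ i j, Y i j = φ (Matrix.single j i 1) := fun i j => rfl
    clear_value Y
    simp only [Fin.sum_univ_two, map_add, Matrix.trace_fin_two, Matrix.mul_apply, hYd]
    have : ∀ i j, φ (Matrix.single i j (M i j)) = M i j * φ (Matrix.single i j 1) := by
      intro i j
      rw [← smul_eq_mul, ← map_smul]; simp
    rw [this, this, this, this]; ring
  have hY0 : Y ≠ 0 := by
    intro h
    apply hφ
    ext1 M
    rw [hφY, h]; simp
  have hYtr : Y 0 0 + Y 1 1 = 0 := by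
    have : φ 1 = 0 := hker (Submodule.subset_span (by simp))
    rwa [hφY, Matrix.mul_one, Matrix.trace_fin_two] at this
  have horth : ∀ g : SL2R, (QuotientGroup.mk g : PSL2R) ∈ G →
      (Y * ((g : Matrix (Fin 2) (Fin 2) ℝ) * X * ((g⁻¹ : SL2R) : Matrix (Fin 2) (Fin 2) ℝ))).trace
        = 0 := by
    intro g hg
    rw [← hφY]
    exact hker (Submodule.subset_span (Or.inr ⟨g, hg, rfl⟩))
  have hinv : ∀ g : SL2R, ((g⁻¹ : SL2R) : Matrix (Fin 2) (Fin 2) ℝ) * g = 1 := fun g => by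
    rw [← Matrix.SpecialLinearGroup.coe_mul]; simp
  have hinv' : ∀ g : SL2R, (g : Matrix (Fin 2) (Fin 2) ℝ) * ((g⁻¹ : SL2R) : Matrix (Fin 2) (Fin 2) ℝ)
      = 1 := fun g => by
    rw [← Matrix.SpecialLinearGroup.coe_mul]; simp
  have htrc : ∀ (g : SL2R) (M : Matrix (Fin 2) (Fin 2) ℝ),
      ((g : Matrix (Fin 2) (Fin 2) ℝ) * M * ((g⁻¹ : SL2R) : Matrix (Fin 2) (Fin 2) ℝ)).trace
        = M.trace := by
    intro g M
    rw [Matrix.trace_mul_comm, ← Matrix.mul_assoc, hinv, Matrix.one_mul]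
  by_cases hcase : ∀ g : SL2R, (QuotientGroup.mk g : PSL2R) ∈ G →
      ∃ c : ℝ, (g : Matrix (Fin 2) (Fin 2) ℝ) * X * ((g⁻¹ : SL2R) : Matrix (Fin 2) (Fin 2) ℝ) = c • X
  · refine hG (aux_elem G X hX htr fun g hg => ?_)
    obtain ⟨c, hc⟩ := hcase g hg
    refine ⟨c, ?_⟩
    rw [← Matrix.smul_mul, ← hc, Matrix.mul_assoc _ _ (g : Matrix (Fin 2) (Fin 2) ℝ), hinv,
      Matrix.mul_one]
  · push Not at hcase
    obtain ⟨g₀, hg₀, hind⟩ := hcase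
    set Z := (g₀ : Matrix (Fin 2) (Fin 2) ℝ) * X * ((g₀⁻¹ : SL2R) : Matrix (Fin 2) (Fin 2) ℝ) with hZ
    have hZtr : Z 0 0 + Z 1 1 = 0 := by
      rw [← Matrix.trace_fin_two, hZ, htrc, Matrix.trace_fin_two, htr]
    have hYX : (Y * X).trace = 0 := by
      have := horth 1 (by simp)
      simpa using this
    have hYZ : (Y * Z).trace = 0 := horth g₀ hg₀
    refine hG (aux_elem G Y hY0 hYtr fun g hg => ?_)
    set V := (g : Matrix (Fin 2) (Fin 2) ℝ) * Y * ((g⁻¹ : SL2R) : Matrix (Fin 2) (Fin 2) ℝ) with hV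
    have hVtr : V 0 0 + V 1 1 = 0 := by
      rw [← Matrix.trace_fin_two, hV, htrc, Matrix.trace_fin_two, hYtr]
    have hVo : ∀ f : SL2R, (QuotientGroup.mk f : PSL2R) ∈ G →
      (V * ((f : Matrix (Fin 2) (Fin 2) ℝ) * X * ((f⁻¹ : SL2R) : Matrix (Fin 2) (Fin 2) ℝ))).trace
        = 0 := by
      intro f hf
      have h1 := horth (g⁻¹ * f) (by
        rw [QuotientGroup.mk_mul, QuotientGroup.mk_inv]; exact G.mul_mem (G.inv_mem hg) hf)
      rw [← htrc g] at h1
      rw [← h1]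
      congr 1
      rw [hV, _root_.mul_inv_rev, inv_inv, Matrix.SpecialLinearGroup.coe_mul,
        Matrix.SpecialLinearGroup.coe_mul]
      simp only [Matrix.mul_assoc]
      rw [hinv', Matrix.mul_one]
    have hVX : (V * X).trace = 0 := by
      have := hVo 1 (by simp)
      simpa using this
    have hVZ : (V * Z).trace = 0 := hVo g₀ hg₀
    have hVc : ∃ c : ℝ, V = c • Y := by
      clear_value V Z Y
      clear hV hZ hVo horth hφY hker hφ hne
      simp only [Matrix.trace_fin_two, Matrix.mul_apply, Fin.sum_univ_two] at *
      -- cross product of `X` and `Z`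
      have hX11 : X 1 1 = - X 0 0 := by linarith
      have hY11 : Y 1 1 = - Y 0 0 := by linarith
      have hZ11 : Z 1 1 = - Z 0 0 := by linarith
      have hV11 : V 1 1 = - V 0 0 := by linarith
      rw [hX11] at hYX hVX
      rw [hZ11] at hYZ hVZ
      rw [hY11] at hYX hYZ
      rw [hV11] at hVX hVZ
      -- if `V` is not proportional to `Y`, then `X` and `Z` are proportional
      have hm : ∀ A B : Matrix (Fin 2) (Fin 2) ℝ, A ≠ 0 → A 1 1 = - A 0 0 → B 1 1 = - B 0 0 →
          A 0 0 * B 0 1 - A 0 1 * B 0 0 = 0 → A 0 0 * B 1 0 - A 1 0 * B 0 0 = 0 →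
          A 0 1 * B 1 0 - A 1 0 * B 0 1 = 0 → ∃ c : ℝ, B = c • A := by
        intro A B hA hA1 hB1 m1 m2 m3
        by_cases a0 : A 0 0 = 0
        · by_cases a1 : A 0 1 = 0
          · have a2 : A 1 0 ≠ 0 := by
              intro a2
              apply hA
              ext i j; fin_cases i <;> fin_cases j <;> simp [a0, a1, a2, hA1]
            refine ⟨B 1 0 / A 1 0, ?_⟩
            ext i j; fin_cases i <;> fin_cases j <;> simp [hA1, hB1] <;> field_simp <;> linarith
          · refine ⟨B 0 1 / A 0 1, ?_⟩
            ext i j; fin_cases i <;> fin_cases j <;> simp [hA1, hB1] <;> field_simp <;> linarith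
        · refine ⟨B 0 0 / A 0 0, ?_⟩
          ext i j; fin_cases i <;> fin_cases j <;> simp [hA1, hB1] <;> field_simp <;> linarith
      by_contra hnc
      have hcross : ¬ (X 0 0 * Z 0 1 - X 0 1 * Z 0 0 = 0 ∧ X 0 0 * Z 1 0 - X 1 0 * Z 0 0 = 0 ∧
          X 0 1 * Z 1 0 - X 1 0 * Z 0 1 = 0) := by
        rintro ⟨m1, m2, m3⟩
        obtain ⟨c, hc⟩ := hm X Z hX hX11 hZ11 m1 m2 m3
        exact hind c hc
      have hcross' : ¬ (Y 0 0 * V 0 1 - Y 0 1 * V 0 0 = 0 ∧ Y 0 0 * V 1 0 - Y 1 0 * V 0 0 = 0 ∧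
          Y 0 1 * V 1 0 - Y 1 0 * V 0 1 = 0) := by
        rintro ⟨m1, m2, m3⟩
        exact hnc (hm Y V hY0 hY11 hV11 m1 m2 m3)
      generalize X 0 0 = x0 at *
      generalize X 0 1 = x1 at *
      generalize X 1 0 = x2 at *
      generalize Z 0 0 = z0 at *
      generalize Z 0 1 = z1 at *
      generalize Z 1 0 = z2 at *
      generalize Y 0 0 = y0 at *
      generalize Y 0 1 = y1 at *
      generalize Y 1 0 = y2 at *
      generalize V 0 0 = v0 at *
      generalize V 0 1 = v1 at *
      generalize V 1 0 = v2 at *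
      have := aux_cross (y0 := y0) (y1 := y1) (y2 := y2) (v0 := v0) (v1 := v1) (v2 := v2)
        (a0 := 2 * x0) (a1 := x2) (a2 := x1) (c0 := 2 * z0) (c1 := z2) (c2 := z1)
        (by linarith) (by linarith) (by linarith) (by linarith)
        (fun ⟨p, q, r⟩ => hcross' ⟨by linarith, by linarith, by linarith⟩)
      exact hcross ⟨by linarith, by linarith, by linarith⟩
    obtain ⟨c, hc⟩ := hVc
    refine ⟨c, ?_⟩
    rw [← Matrix.smul_mul, ← hc, hV, Matrix.mul_assoc _ _ (g : Matrix (Fin 2) (Fin 2) ℝ), hinv,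
      Matrix.mul_one]
theorem aux_mk_eq {g h : SL2R} (e : (QuotientGroup.mk g : PSL2R) = QuotientGroup.mk h) :
    (h : Matrix (Fin 2) (Fin 2) ℝ) = g ∨ (h : Matrix (Fin 2) (Fin 2) ℝ) = -g := by
  rw [QuotientGroup.eq, Matrix.SpecialLinearGroup.mem_center_iff] at e
  obtain ⟨r, hr, hs⟩ := e
  have h1 : (h : Matrix (Fin 2) (Fin 2) ℝ) = g * Matrix.scalar (Fin 2) r := by
    rw [hs, ← Matrix.SpecialLinearGroup.coe_mul]; simp
  have h2 : r ^ 2 = 1 := by simpa using hr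
  rcases (show r = 1 ∨ r = -1 by grind) with h3 | h3
  · left; rw [h1, h3]; simp
  · right; rw [h1, h3]; ext i j; simp

theorem aux_mk_neg (g : SL2R) : (QuotientGroup.mk (-g) : PSL2R) = QuotientGroup.mk g := by
  rw [QuotientGroup.eq, Matrix.SpecialLinearGroup.mem_center_iff]
  refine ⟨-1, by simp, ?_⟩
  have : (-g)⁻¹ * g = -1 := by
    rw [inv_mul_eq_iff_eq_mul]; simp
  rw [this]
  ext i j
  fin_cases i <;> fin_cases j <;> simp

theorem aux_absTrace (g : SL2R) :
    absTrace (QuotientGroup.mk g) = |(g : Matrix (Fin 2) (Fin 2) ℝ).trace| := by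
  unfold absTrace
  have : (QuotientGroup.mk g : PSL2R) =
      QuotientGroup.mk (Quotient.out (QuotientGroup.mk g : PSL2R)) := by
    exact (QuotientGroup.out_eq' _).symm
  rcases aux_mk_eq this with h | h <;> rw [h] <;> simp [Matrix.trace_neg]

theorem aux_absTrace_conj {A B : PSL2R} (h : IsConj A B) : absTrace A = absTrace B := by
  obtain ⟨c, rfl⟩ := isConj_iff.1 h
  obtain ⟨a, rfl⟩ := QuotientGroup.mk_surjective A
  obtain ⟨p, rfl⟩ := QuotientGroup.mk_surjective c
  rw [← QuotientGroup.mk_inv, ← QuotientGroup.mk_mul, ← QuotientGroup.mk_mul, aux_absTrace,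
    aux_absTrace]
  rw [Matrix.SpecialLinearGroup.coe_mul, Matrix.trace_mul_comm, ← Matrix.SpecialLinearGroup.coe_mul]
  simp

theorem aux_ell_conj_pos (g : SL2R) (ht : |(g : Matrix (Fin 2) (Fin 2) ℝ).trace| < 2)
    (hb : 0 < g 0 1) : ∃ θ ∈ Set.Ioo (0 : ℝ) π, IsConj (rotMat θ) g := by
  rw [Matrix.trace_fin_two, abs_lt] at ht
  have hdet : g 0 0 * g 1 1 - g 0 1 * g 1 0 = 1 := by
    rw [← Matrix.det_fin_two]; exact g.prop
  set t := (g 0 0 + g 1 1) / 2 with htd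
  have hθ0 : 0 < Real.arccos t := Real.arccos_pos.2 (by linarith)
  have hθ1 : Real.arccos t < π := Real.arccos_lt_pi.2 (by linarith)
  have hcos : Real.cos (Real.arccos t) = t := Real.cos_arccos (by linarith) (by linarith)
  have hsin : 0 < Real.sin (Real.arccos t) := Real.sin_pos_of_pos_of_lt_pi hθ0 hθ1
  have hsc := Real.sin_sq_add_cos_sq (Real.arccos t)
  refine ⟨Real.arccos t, ⟨hθ0, hθ1⟩, ?_⟩
  rw [hcos] at hsc
  set s := Real.sin (Real.arccos t) with hs
  have hp : 0 < √(g 0 1 / s) := Real.sqrt_pos.2 (by positivity)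
  have hp2 : √(g 0 1 / s) ^ 2 = g 0 1 / s := Real.sq_sqrt (by positivity)
  set p := √(g 0 1 / s)
  have hp3 : g 0 1 = p ^ 2 * s := by rw [hp2]; field_simp
  have h11 : g 1 1 = 2 * t - g 0 0 := by rw [htd]; ring
  have hg10 : g 1 0 = (g 0 0 * (2 * t - g 0 0) - 1) / (p ^ 2 * s) := by
    rw [eq_div_iff (by positivity), ← hp3, ← h11]; linarith
  let P : SL2R := ⟨!![p, 0; (t - g 0 0) / (p * s), 1 / p], by
    simp [Matrix.det_fin_two_of, hp.ne']⟩
  refine isConj_iff.2 ⟨P, ?_⟩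
  rw [mul_inv_eq_iff_eq_mul]
  apply Subtype.ext
  change (↑(P * rotMat (Real.arccos t)) : Matrix (Fin 2) (Fin 2) ℝ) = ↑(g * P)
  rw [Matrix.SpecialLinearGroup.coe_mul, Matrix.SpecialLinearGroup.coe_mul]
  have eg : (g : Matrix (Fin 2) (Fin 2) ℝ) =
      !![g 0 0, p ^ 2 * s; (g 0 0 * (2 * t - g 0 0) - 1) / (p ^ 2 * s), 2 * t - g 0 0] := by
    rw [← hg10, ← h11, ← hp3]; exact Matrix.eta_fin_two _
  have eP : (P : Matrix (Fin 2) (Fin 2) ℝ) = !![p, 0; (t - g 0 0) / (p * s), 1 / p] := rfl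
  have eR : (rotMat (Real.arccos t) : Matrix (Fin 2) (Fin 2) ℝ) = !![t, s; -s, t] := by
    rw [← hcos, hs]; simp [rotMat, hcos]
  rw [eP, eR]
  generalize g 0 0 = a at *
  rw [eg, Matrix.mul_fin_two, Matrix.mul_fin_two]
  have hs' := hsin.ne'
  have hp' := hp.ne'
  clear_value s p t
  ext i j
  fin_cases i <;> fin_cases j <;> simp <;> field_simp <;> try ring1
  linear_combination -hsc

theorem aux_ell_conj (g : SL2R) (ht : |(g : Matrix (Fin 2) (Fin 2) ℝ).trace| < 2) :
    ∃ θ ∈ Set.Ioo (0 : ℝ) π, IsConj (QuotientGroup.mk (rotMat θ) : PSL2R) (QuotientGroup.mk g) := by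
  rcases lt_trichotomy (g 0 1) 0 with hb | hb | hb
  · obtain ⟨θ, hθ, h⟩ := aux_ell_conj_pos (-g) (by simpa [Matrix.trace_neg] using ht)
      (by simpa using hb)
    refine ⟨θ, hθ, ?_⟩
    rw [← aux_mk_neg g]
    exact MonoidHom.map_isConj (QuotientGroup.mk' (Subgroup.center SL2R)) h
  · exfalso
    have hdet : g 0 0 * g 1 1 - g 0 1 * g 1 0 = 1 := by
      rw [← Matrix.det_fin_two]; exact g.prop
    rw [Matrix.trace_fin_two, abs_lt] at ht
    rw [hb] at hdet
    nlinarith [sq_nonneg (g 0 0 - g 1 1)]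
  · obtain ⟨θ, hθ, h⟩ := aux_ell_conj_pos g ht hb
    exact ⟨θ, hθ, MonoidHom.map_isConj (QuotientGroup.mk' (Subgroup.center SL2R)) h⟩

theorem aux_rot_spec (A : PSL2R)
    (h : ∃ θ ∈ Set.Ioo (0:ℝ) π, IsConj (QuotientGroup.mk (rotMat θ) : PSL2R) A) :
    ∃ θ ∈ Set.Ioo (0:ℝ) π, rot A = ((2 * θ : ℝ) : AddCircle (2 * π)) ∧
      absTrace A = |2 * Real.cos θ| := by
  refine ⟨h.choose, h.choose_spec.1, ?_, ?_⟩
  · unfold rot; rw [dif_pos h]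
  · rw [← aux_absTrace_conj h.choose_spec.2, aux_absTrace]
    generalize h.choose = θ
    simp [rotMat, Matrix.trace_fin_two]
    rw [← two_mul, abs_mul]; simp

theorem aux_coe_inj {a b : ℝ} (ha : a ∈ Set.Ico 0 (2 * π)) (hb : b ∈ Set.Ico 0 (2 * π))
    (h : (a : AddCircle (2 * π)) = b) : a = b := by
  have : Fact (0 < 2 * π) := ⟨by positivity⟩
  exact (AddCircle.coe_eq_coe_iff_of_mem_Ico (a := 0) (by simpa using ha) (by simpa using hb)).1 h

theorem aux_rot_absTrace (A B : SL2R) (ht : |(A : Matrix (Fin 2) (Fin 2) ℝ).trace| < 2)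
    (h : rot (QuotientGroup.mk A) = rot (QuotientGroup.mk B)) :
    |(A : Matrix (Fin 2) (Fin 2) ℝ).trace| = |(B : Matrix (Fin 2) (Fin 2) ℝ).trace| := by
  obtain ⟨θ, hθ, h1, h2⟩ := aux_rot_spec _ (aux_ell_conj A ht)
  by_cases hB : ∃ θ ∈ Set.Ioo (0:ℝ) π,
      IsConj (QuotientGroup.mk (rotMat θ) : PSL2R) (QuotientGroup.mk B)
  · obtain ⟨η, hη, h3, h4⟩ := aux_rot_spec _ hB
    rw [h1, h3] at h
    have := aux_coe_inj ⟨by linarith [hθ.1], by linarith [hθ.2]⟩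
      ⟨by linarith [hη.1], by linarith [hη.2]⟩ h
    have : θ = η := by linarith
    rw [← aux_absTrace, ← aux_absTrace, h2, h4, this]
  · exfalso
    have h3 : rot (QuotientGroup.mk B) = ((0 : ℝ) : AddCircle (2 * π)) := by
      unfold rot; rw [dif_neg hB]; simp
    rw [h1, h3] at h
    have := aux_coe_inj ⟨by linarith [hθ.1], by linarith [hθ.2]⟩
      ⟨le_rfl, by positivity⟩ h
    linarith [hθ.1]
section MainAux

attribute [local instance] Matrix.linftyOpNormedRing Matrix.linftyOpNormedAlgebra

open Filter Topology

theorem aux_topGroup : IsTopologicalGroup SL2R where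
  continuous_inv := continuous_induced_rng.mpr continuous_induced_dom.matrix_adjugate
  continuous_mul := continuous_induced_rng.mpr <|
    (continuous_induced_dom.comp continuous_fst).mul (continuous_induced_dom.comp continuous_snd)

theorem aux_coe_cont : Continuous (fun g : SL2R => (g : Matrix (Fin 2) (Fin 2) ℝ)) :=
  continuous_induced_dom

theorem aux_nondisc (G : Subgroup PSL2R) (hG : ¬ IsDiscreteSubgroup G)
    (U : Set (Matrix (Fin 2) (Fin 2) ℝ)) (hU : IsOpen U) (h1U : 1 ∈ U) :
    ∃ g : SL2R, (QuotientGroup.mk g : PSL2R) ∈ G ∧ (g : Matrix (Fin 2) (Fin 2) ℝ) ≠ 1 ∧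
      (g : Matrix (Fin 2) (Fin 2) ℝ) ∈ U := by
  by_contra hcon
  push Not at hcon
  apply hG
  have := aux_topGroup
  unfold IsDiscreteSubgroup
  apply discreteTopology_of_isOpen_singleton_one
  have hV : IsOpen ((QuotientGroup.mk : SL2R → PSL2R) ''
      ((fun g : SL2R => (g : Matrix (Fin 2) (Fin 2) ℝ)) ⁻¹' U)) :=
    QuotientGroup.isOpenMap_coe _ (hU.preimage aux_coe_cont)
  have : ({1} : Set G) = Subtype.val ⁻¹' ((QuotientGroup.mk : SL2R → PSL2R) ''
      ((fun g : SL2R => (g : Matrix (Fin 2) (Fin 2) ℝ)) ⁻¹' U)) := by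
    ext x
    simp only [Set.mem_singleton_iff, Set.mem_preimage, Set.mem_image]
    constructor
    · rintro rfl
      exact ⟨1, by simpa using h1U, rfl⟩
    · rintro ⟨g, hg, hgx⟩
      by_contra hx
      refine hcon g (hgx ▸ x.2) ?_ hg
      intro h1
      apply hx
      apply Subtype.ext
      rw [← hgx]
      have : g = 1 := Subtype.ext h1
      rw [this]; rfl
  rw [this]
  exact hV.preimage continuous_subtype_val

/-- the matrices of the elements of `SL(2,ℝ)` over `G`. -/
def auxG (G : Subgroup PSL2R) : Submonoid (Matrix (Fin 2) (Fin 2) ℝ) where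
  carrier := {M | ∃ g : SL2R, (QuotientGroup.mk g : PSL2R) ∈ G ∧
    (g : Matrix (Fin 2) (Fin 2) ℝ) = M}
  mul_mem' := by
    rintro _ _ ⟨g, hg, rfl⟩ ⟨h, hh, rfl⟩
    exact ⟨g * h, by rw [QuotientGroup.mk_mul]; exact G.mul_mem hg hh, by simp⟩
  one_mem' := ⟨1, by simp, by simp⟩

/-- positive multiples of elements of a submonoid. -/
def auxPos (K : Submonoid (Matrix (Fin 2) (Fin 2) ℝ)) : Submonoid (Matrix (Fin 2) (Fin 2) ℝ) where
  carrier := {M | ∃ r : ℝ, 0 < r ∧ ∃ k ∈ K, M = r • k}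
  mul_mem' := by
    rintro _ _ ⟨r, hr, k, hk, rfl⟩ ⟨s, hs, l, hl, rfl⟩
    exact ⟨r * s, mul_pos hr hs, k * l, K.mul_mem hk hl, by
      rw [Matrix.smul_mul, Matrix.mul_smul, smul_smul]⟩
  one_mem' := ⟨1, one_pos, 1, K.one_mem, by simp⟩

theorem aux_det_closure (G : Subgroup PSL2R) (M : Matrix (Fin 2) (Fin 2) ℝ)
    (hM : M ∈ (auxG G).topologicalClosure) : M.det = 1 := by
  have hcl : IsClosed {M : Matrix (Fin 2) (Fin 2) ℝ | M.det = 1} :=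
    isClosed_eq (by fun_prop) continuous_const
  have : closure (auxG G : Set (Matrix (Fin 2) (Fin 2) ℝ)) ⊆ {M | M.det = 1} := by
    apply closure_minimal _ hcl
    rintro _ ⟨g, -, rfl⟩
    exact g.prop
  exact this hM

theorem aux_trace_zero (X : Matrix (Fin 2) (Fin 2) ℝ)
    (h : ∀ t : ℝ, (NormedSpace.exp (t • X)).det = 1) : X 0 0 + X 1 1 = 0 := by
  have h0 := hasDerivAt_exp_smul_const (𝕂 := ℝ) X (0 : ℝ)
  rw [zero_smul, NormedSpace.exp_zero, one_mul] at h0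
  have hij : ∀ i j, HasDerivAt (fun t : ℝ => NormedSpace.exp (t • X) i j) (X i j) 0 := by
    intro i j
    have := (Matrix.entryLinearMap ℝ ℝ i j :
      Matrix (Fin 2) (Fin 2) ℝ →ₗ[ℝ] ℝ).toContinuousLinearMap.hasFDerivAt.comp_hasDerivAt
      (0 : ℝ) h0
    exact this
  have hd := ((hij 0 0).mul (hij 1 1)).sub ((hij 0 1).mul (hij 1 0))
  have hc : HasDerivAt (fun t : ℝ => (1 : ℝ)) 0 0 := hasDerivAt_const _ _
  have he : (fun t : ℝ => NormedSpace.exp (t • X) 0 0 * NormedSpace.exp (t • X) 1 1 -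
      NormedSpace.exp (t • X) 0 1 * NormedSpace.exp (t • X) 1 0) = fun t : ℝ => (1 : ℝ) := by
    funext t
    rw [← h t, Matrix.det_fin_two]
  have hd' : HasDerivAt (fun t : ℝ => (1 : ℝ)) _ 0 := he ▸ (show HasDerivAt
    (fun t : ℝ => NormedSpace.exp (t • X) 0 0 * NormedSpace.exp (t • X) 1 1 -
      NormedSpace.exp (t • X) 0 1 * NormedSpace.exp (t • X) 1 0) _ 0 from hd)
  have := hd'.unique hc
  simpa using this

theorem aux_nbhd (G : Subgroup PSL2R) (hE : ¬ IsElementary G) (hD : ¬ IsDiscreteSubgroup G) :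
    ∀ᶠ M in 𝓝 (1 : Matrix (Fin 2) (Fin 2) ℝ), M.det = 1 → M ∈ (auxG G).topologicalClosure := by
  set K := (auxG G).topologicalClosure with hK
  have hle : auxG G ≤ K := Submonoid.le_topologicalClosure _
  obtain ⟨X, hX0, hX⟩ := aux_one_param K (Submonoid.isClosed_topologicalClosure _) (by
    intro ε hε
    obtain ⟨g, hg, hg1, hgU⟩ := aux_nondisc G hD (Metric.ball 1 ε) Metric.isOpen_ball (by simpa)
    refine ⟨g, ((g⁻¹ : SL2R) : Matrix (Fin 2) (Fin 2) ℝ), hg1, by simpa [dist_eq_norm] using hgU,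
      hle ⟨g, hg, rfl⟩, hle ⟨g⁻¹, ?_, rfl⟩, ?_⟩
    · rw [QuotientGroup.mk_inv]; exact G.inv_mem hg
    · rw [← Matrix.SpecialLinearGroup.coe_mul]; simp)
  have hXtr : X 0 0 + X 1 1 = 0 := aux_trace_zero X fun t => aux_det_closure G _ (hX t)
  have hspan := aux_conj_span G hE X hX0 hXtr
  set T := ({1} ∪ {Z : Matrix (Fin 2) (Fin 2) ℝ | ∃ g : SL2R,
      (QuotientGroup.mk g : PSL2R) ∈ G ∧
        Z = (g : Matrix (Fin 2) (Fin 2) ℝ) * X * ((g⁻¹ : SL2R) : Matrix (Fin 2) (Fin 2) ℝ)})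
  have hfr : Module.finrank ℝ (Submodule.span ℝ T) = 4 := by
    rw [hspan, finrank_top]; simp [Module.finrank_matrix]
  have hex := Submodule.exists_fun_fin_finrank_span_eq ℝ T
  rw [hfr, hspan] at hex
  obtain ⟨f, hfT, hfs, -⟩ := hex
  have hcov := aux_cover (auxPos K) f hfs (by
    intro i t
    rcases hfT i with h1 | ⟨g, hg, h2⟩
    · rw [Set.mem_singleton_iff] at h1
      rw [h1]
      refine ⟨Real.exp t, Real.exp_pos t, 1, K.one_mem, ?_⟩
      rw [← Algebra.algebraMap_eq_smul_one, ← Algebra.algebraMap_eq_smul_one, Real.exp_eq_exp_ℝ]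
      exact (NormedSpace.algebraMap_exp_comm t).symm
    · refine ⟨1, one_pos, (g : Matrix (Fin 2) (Fin 2) ℝ) * NormedSpace.exp (t • X) *
        ((g⁻¹ : SL2R) : Matrix (Fin 2) (Fin 2) ℝ), ?_, ?_⟩
      · refine K.mul_mem (K.mul_mem (hle ⟨g, hg, rfl⟩) (hX t)) (hle ⟨g⁻¹, ?_, rfl⟩)
        rw [QuotientGroup.mk_inv]; exact G.inv_mem hg
      · let u : (Matrix (Fin 2) (Fin 2) ℝ)ˣ := ⟨g, ((g⁻¹ : SL2R) : Matrix (Fin 2) (Fin 2) ℝ),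
          by rw [← Matrix.SpecialLinearGroup.coe_mul]; simp,
          by rw [← Matrix.SpecialLinearGroup.coe_mul]; simp⟩
        rw [one_smul, h2]
        have := Matrix.exp_units_conj u (t • X)
        rw [← Matrix.smul_mul, ← Matrix.mul_smul]
        exact this)
  filter_upwards [hcov] with M hM hdet
  obtain ⟨r, hr, k, hk, rfl⟩ := hM
  have hkd : k.det = 1 := aux_det_closure G k hk
  rw [Matrix.det_smul, hkd] at hdet
  simp at hdet
  have : r = 1 := by
    rcases hdet with h | h
    · exact h
    · linarith
  rw [this, one_smul]
  exact hk

theorem aux_gen (K : Submonoid (Matrix (Fin 2) (Fin 2) ℝ)) 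
    (h : ∀ᶠ M in 𝓝 (1 : Matrix (Fin 2) (Fin 2) ℝ), M.det = 1 → M ∈ K)
    (M : Matrix (Fin 2) (Fin 2) ℝ) (hM : M.det = 1) : M ∈ K := by
  have hU : ∀ x : ℝ, !![1, x; 0, 1] ∈ K := by
    intro x
    have hc : Tendsto (fun n : ℕ => !![1, x / ((n : ℝ) + 1); 0, 1]) atTop
        (𝓝 (1 : Matrix (Fin 2) (Fin 2) ℝ)) := by
      have h1 : Continuous (fun y : ℝ => !![1, y; 0, 1]) := by fun_prop
      have h2 : Tendsto (fun n : ℕ => x / ((n : ℝ) + 1)) atTop (𝓝 0) := by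
        have := (tendsto_one_div_add_atTop_nhds_zero_nat (𝕜 := ℝ)).const_mul x
        simpa [mul_one_div, div_eq_mul_inv] using this
      have h3 := (h1.tendsto 0).comp h2
      have h4 : (!![1, 0; 0, 1] : Matrix (Fin 2) (Fin 2) ℝ) = 1 := Matrix.one_fin_two.symm
      rw [h4] at h3
      exact h3
    obtain ⟨n, hn⟩ := (hc.eventually h).exists
    have hp : ∀ (y : ℝ) (m : ℕ), (!![1, y; 0, 1] : Matrix (Fin 2) (Fin 2) ℝ) ^ m
        = !![1, m * y; 0, 1] := by
      intro y m
      induction m with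
      | zero => simp [Matrix.one_fin_two]
      | succ m ih => rw [pow_succ, ih, Matrix.mul_fin_two]; simp; ring
    have := K.pow_mem (hn (by simp [Matrix.det_fin_two_of])) (n + 1)
    rw [hp] at this
    have e : ((n + 1 : ℕ) : ℝ) * (x / ((n : ℝ) + 1)) = x := by push_cast; field_simp
    rwa [e] at this
  have hL : ∀ x : ℝ, !![1, 0; x, 1] ∈ K := by
    intro x
    have hc : Tendsto (fun n : ℕ => !![1, 0; x / ((n : ℝ) + 1), 1]) atTop
        (𝓝 (1 : Matrix (Fin 2) (Fin 2) ℝ)) := by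
      have h1 : Continuous (fun y : ℝ => !![1, 0; y, 1]) := by fun_prop
      have h2 : Tendsto (fun n : ℕ => x / ((n : ℝ) + 1)) atTop (𝓝 0) := by
        have := (tendsto_one_div_add_atTop_nhds_zero_nat (𝕜 := ℝ)).const_mul x
        simpa [mul_one_div, div_eq_mul_inv] using this
      have h3 := (h1.tendsto 0).comp h2
      have h4 : (!![1, 0; 0, 1] : Matrix (Fin 2) (Fin 2) ℝ) = 1 := Matrix.one_fin_two.symm
      rw [h4] at h3
      exact h3
    obtain ⟨n, hn⟩ := (hc.eventually h).exists
    have hp : ∀ (y : ℝ) (m : ℕ), (!![1, 0; y, 1] : Matrix (Fin 2) (Fin 2) ℝ) ^ m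
        = !![1, 0; m * y, 1] := by
      intro y m
      induction m with
      | zero => simp [Matrix.one_fin_two]
      | succ m ih => rw [pow_succ, ih, Matrix.mul_fin_two]; simp; ring
    have := K.pow_mem (hn (by simp [Matrix.det_fin_two_of])) (n + 1)
    rw [hp] at this
    have e : ((n + 1 : ℕ) : ℝ) * (x / ((n : ℝ) + 1)) = x := by push_cast; field_simp
    rwa [e] at this
  -- matrices with nonzero lower left entry
  have hne : ∀ N : Matrix (Fin 2) (Fin 2) ℝ, N.det = 1 → N 1 0 ≠ 0 → N ∈ K := by
    intro N hN h0
    have hd : N 0 0 * N 1 1 - N 0 1 * N 1 0 = 1 := by rw [← Matrix.det_fin_two]; exact hN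
    have : N = !![1, (N 0 0 - 1) / N 1 0; 0, 1] * !![1, 0; N 1 0, 1] *
        !![1, (N 1 1 - 1) / N 1 0; 0, 1] := by
      rw [Matrix.mul_fin_two, Matrix.mul_fin_two]
      ext i j
      fin_cases i <;> fin_cases j <;> simp <;> field_simp <;> try ring1
      linear_combination -hd
    rw [this]
    exact K.mul_mem (K.mul_mem (hU _) (hL _)) (hU _)
  by_cases h0 : M 1 0 = 0
  · have hd : M 0 0 * M 1 1 - M 0 1 * M 1 0 = 1 := by rw [← Matrix.det_fin_two]; exact hM
    have h00 : M 0 0 ≠ 0 := by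
      intro h00; rw [h0, h00] at hd; simp at hd
    have : M = !![1, 0; -1, 1] * (!![1, 0; 1, 1] * M) := by
      rw [← Matrix.mul_assoc, Matrix.mul_fin_two]
      simp [← Matrix.one_fin_two]
    rw [this]
    refine K.mul_mem (hL _) (hne _ ?_ ?_)
    · rw [Matrix.det_mul, hM]; simp [Matrix.det_fin_two_of]
    · simp [Matrix.mul_apply, Fin.sum_univ_two, h0, h00]
  · exact hne M hM h0

/-- the closure of `G` is everything, even when generated by elements close to `1`. -/
theorem aux_dense (G : Subgroup PSL2R) (hE : ¬ IsElementary G) (hD : ¬ IsDiscreteSubgroup G)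
    (Q : Set (Matrix (Fin 2) (Fin 2) ℝ)) (hQ : IsOpen Q) (h1Q : 1 ∈ Q)
    (M : Matrix (Fin 2) (Fin 2) ℝ) (hM : M.det = 1) :
    M ∈ (Submonoid.closure ((auxG G : Set (Matrix (Fin 2) (Fin 2) ℝ)) ∩ Q)).topologicalClosure := by
  refine aux_gen _ ?_ M hM
  filter_upwards [aux_nbhd G hE hD, hQ.mem_nhds h1Q] with N hN hNQ hdet
  have h1 : N ∈ closure (auxG G : Set (Matrix (Fin 2) (Fin 2) ℝ)) := hN hdet
  have h2 : N ∈ closure ((auxG G : Set (Matrix (Fin 2) (Fin 2) ℝ)) ∩ Q) := by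
    refine mem_closure_iff.2 fun o ho hNo => ?_
    obtain ⟨y, hy, hy2⟩ := mem_closure_iff.1 h1 (o ∩ Q) (ho.inter hQ) ⟨hNo, hNQ⟩
    exact ⟨y, hy.1, hy2, hy.2⟩
  exact closure_mono Submonoid.subset_closure h2

theorem aux_generate (G : Subgroup PSL2R) (hE : ¬ IsElementary G) (hD : ¬ IsDiscreteSubgroup G)
    (Q : Set (Matrix (Fin 2) (Fin 2) ℝ)) (hQ : IsOpen Q) (h1Q : 1 ∈ Q)
    (M : Matrix (Fin 2) (Fin 2) ℝ) (hM : M ∈ auxG G) :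
    M ∈ Submonoid.closure ((auxG G : Set (Matrix (Fin 2) (Fin 2) ℝ)) ∩ Q) := by
  obtain ⟨g, hg, rfl⟩ := hM
  have hcl := aux_dense G hE hD Q hQ h1Q g g.prop
  have ho : IsOpen {N : Matrix (Fin 2) (Fin 2) ℝ | N.adjugate * (g : Matrix (Fin 2) (Fin 2) ℝ) ∈ Q} :=
    hQ.preimage (by fun_prop)
  obtain ⟨N, hN1, hN2⟩ := mem_closure_iff.1 hcl _ ho (by
    change (g : Matrix (Fin 2) (Fin 2) ℝ).adjugate * (g : Matrix (Fin 2) (Fin 2) ℝ) ∈ Q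
    rw [Matrix.adjugate_mul, g.prop]; simpa using h1Q)
  have hNG : N ∈ auxG G := (Submonoid.closure_le.2 Set.inter_subset_left) hN2
  obtain ⟨n, hn, rfl⟩ := hNG
  have : (g : Matrix (Fin 2) (Fin 2) ℝ) = n * ((n⁻¹ * g : SL2R) : Matrix (Fin 2) (Fin 2) ℝ) := by
    rw [← Matrix.SpecialLinearGroup.coe_mul]; simp
  rw [this]
  refine Submonoid.mul_mem _ hN2 (Submonoid.subset_closure ⟨⟨n⁻¹ * g, ?_, rfl⟩, ?_⟩)
  · rw [QuotientGroup.mk_mul, QuotientGroup.mk_inv]; exact G.mul_mem (G.inv_mem hn) hg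
  · rw [Matrix.SpecialLinearGroup.coe_mul, Matrix.SpecialLinearGroup.coe_inv]; exact hN1

theorem aux_exists_ell (G : Subgroup PSL2R) (hE : ¬ IsElementary G) (hD : ¬ IsDiscreteSubgroup G) :
    ∃ g : SL2R, (QuotientGroup.mk g : PSL2R) ∈ G ∧
      |(g : Matrix (Fin 2) (Fin 2) ℝ).trace| < 2 := by
  have h := aux_dense G hE hD Set.univ isOpen_univ trivial !![0, 1; -1, 0]
    (by simp [Matrix.det_fin_two_of])
  have ho : IsOpen {N : Matrix (Fin 2) (Fin 2) ℝ | |N.trace| < 2} :=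
    isOpen_lt (by fun_prop) continuous_const
  obtain ⟨N, hN1, hN2⟩ := mem_closure_iff.1 h _ ho (by simp [Matrix.trace_fin_two])
  have hNG : N ∈ auxG G := (Submonoid.closure_le.2 Set.inter_subset_left) hN2
  obtain ⟨n, hn, rfl⟩ := hNG
  exact ⟨n, hn, hN1⟩

/-- pairs of lifts. -/
def auxH {Γ : Type*} [Group Γ] (ρ₁ ρ₂ : Γ →* PSL2R) : Subgroup (SL2R × SL2R) where
  carrier := {p | ∃ γ, (QuotientGroup.mk p.1 : PSL2R) = ρ₁ γ ∧ (QuotientGroup.mk p.2 : PSL2R) = ρ₂ γ}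
  mul_mem' := by
    rintro p q ⟨γ, h1, h2⟩ ⟨δ, h3, h4⟩
    exact ⟨γ * δ, by simp [h1, h3], by simp [h2, h4]⟩
  one_mem' := ⟨1, by simp, by simp⟩
  inv_mem' := by
    rintro p ⟨γ, h1, h2⟩
    exact ⟨γ⁻¹, by simp [h1], by simp [h2]⟩

open Kronecker in
/-- the tensor square representation of pairs. -/
def auxR : SL2R × SL2R →* Matrix (Fin 2 × Fin 2) (Fin 2 × Fin 2) ℝ ×
    Matrix (Fin 2 × Fin 2) (Fin 2 × Fin 2) ℝ where
  toFun p := ((p.1 : Matrix (Fin 2) (Fin 2) ℝ) ⊗ₖ (p.1 : Matrix (Fin 2) (Fin 2) ℝ),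
    (p.2 : Matrix (Fin 2) (Fin 2) ℝ) ⊗ₖ (p.2 : Matrix (Fin 2) (Fin 2) ℝ))
  map_one' := by simp [Matrix.one_kronecker_one]
  map_mul' p q := by simp [Matrix.mul_kronecker_mul]

theorem aux_main {Γ : Type*} [Group Γ] (ρ₁ ρ₂ : Γ →* PSL2R)
    (hE : ¬ IsElementary ρ₁.range) (hD : ¬ IsDiscreteSubgroup ρ₁.range)
    (h_rot : ∀ γ : Γ, rot (ρ₁ γ) = rot (ρ₂ γ)) (p : SL2R × SL2R) (hp : p ∈ auxH ρ₁ ρ₂) :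
    (p.1 : Matrix (Fin 2) (Fin 2) ℝ).trace ^ 2 = (p.2 : Matrix (Fin 2) (Fin 2) ℝ).trace ^ 2 := by
  let S : ℝ → Set (auxH ρ₁ ρ₂) := fun a =>
    {h | ((h : SL2R × SL2R).1 : Matrix (Fin 2) (Fin 2) ℝ) ∈ Metric.ball 1 a}
  have hlift : ∀ A : SL2R, (QuotientGroup.mk A : PSL2R) ∈ ρ₁.range →
      ∃ h : auxH ρ₁ ρ₂, (h : SL2R × SL2R).1 = A := by
    rintro A ⟨γ, hγ⟩
    obtain ⟨B, hB⟩ := QuotientGroup.mk_surjective (ρ₂ γ)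
    exact ⟨⟨(A, B), γ, hγ.symm, hB⟩, rfl⟩
  have hrange : ∀ h : auxH ρ₁ ρ₂, (QuotientGroup.mk (h : SL2R × SL2R).1 : PSL2R) ∈ ρ₁.range := by
    rintro ⟨h, γ, h1, h2⟩
    exact ⟨γ, h1.symm⟩
  obtain ⟨a, ha, hspan⟩ := aux_span (auxR.comp (auxH ρ₁ ρ₂).subtype) S
    (fun a b hab h hh => Metric.ball_subset_ball hab hh)
    (by
      intro a ha
      have hc : Tendsto (fun q : Matrix (Fin 2) (Fin 2) ℝ × Matrix (Fin 2) (Fin 2) ℝ => q.1 * q.2)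
          (𝓝 1 ×ˢ 𝓝 1) (𝓝 1) := by
        rw [← nhds_prod_eq]
        have : Continuous
          (fun q : Matrix (Fin 2) (Fin 2) ℝ × Matrix (Fin 2) (Fin 2) ℝ => q.1 * q.2) := by fun_prop
        have := this.tendsto (1, 1)
        rwa [mul_one] at this
      have hb := hc (Metric.ball_mem_nhds (1 : Matrix (Fin 2) (Fin 2) ℝ) ha)
      rw [mem_map] at hb
      obtain ⟨b, hb0, hb⟩ :=
        ((Metric.nhds_basis_ball (x := (1 : Matrix (Fin 2) (Fin 2) ℝ))).prod_self).mem_iff.1 hb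
      refine ⟨b, hb0, fun x hx y hy => ?_⟩
      have := hb (Set.mk_mem_prod hx hy)
      change (((x * y : auxH ρ₁ ρ₂) : SL2R × SL2R).1 : Matrix (Fin 2) (Fin 2) ℝ) ∈ Metric.ball 1 a
      rw [Subgroup.coe_mul, Prod.fst_mul, Matrix.SpecialLinearGroup.coe_mul]
      exact this)
    (by
      intro a ha
      change (((1 : auxH ρ₁ ρ₂) : SL2R × SL2R).1 : Matrix (Fin 2) (Fin 2) ℝ) ∈ Metric.ball 1 a
      simpa using ha)
    (by
      intro a ha
      rw [eq_top_iff]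
      rintro h -
      have hM := aux_generate ρ₁.range hE hD (Metric.ball 1 a) Metric.isOpen_ball
        (Metric.mem_ball_self ha) (h : SL2R × SL2R).1 ⟨_, hrange h, rfl⟩
      have hall : ∀ N ∈ Submonoid.closure
          ((auxG ρ₁.range : Set (Matrix (Fin 2) (Fin 2) ℝ)) ∩ Metric.ball 1 a),
          ∃ s ∈ Submonoid.closure (S a),
            (((s : auxH ρ₁ ρ₂) : SL2R × SL2R).1 : Matrix (Fin 2) (Fin 2) ℝ) = N := by
        intro N hN
        induction hN using Submonoid.closure_induction with
        | mem x hx =>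
          obtain ⟨⟨g, hg, rfl⟩, hx2⟩ := hx
          obtain ⟨s, hs⟩ := hlift g hg
          refine ⟨s, Submonoid.subset_closure ?_, by rw [hs]⟩
          change ((s : SL2R × SL2R).1 : Matrix (Fin 2) (Fin 2) ℝ) ∈ Metric.ball 1 a
          rw [hs]; exact hx2
        | one => exact ⟨1, Submonoid.one_mem _, by simp⟩
        | mul x y _ _ hx hy =>
          obtain ⟨s, hs, rfl⟩ := hx
          obtain ⟨t, ht, rfl⟩ := hy
          exact ⟨s * t, Submonoid.mul_mem _ hs ht, by simp⟩
      obtain ⟨s, hs, hsN⟩ := hall _ hM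
      have e1 : (s : SL2R × SL2R).1 = (h : SL2R × SL2R).1 := Subtype.ext hsN
      have e2 : h = s * (s⁻¹ * h) := by group
      rw [e2]
      refine Submonoid.mul_mem _ hs (Submonoid.subset_closure ?_)
      change (((s⁻¹ * h : auxH ρ₁ ρ₂) : SL2R × SL2R).1 : Matrix (Fin 2) (Fin 2) ℝ) ∈ Metric.ball 1 a
      have e3 : ((s⁻¹ * h : auxH ρ₁ ρ₂) : SL2R × SL2R).1 = 1 := by
        rw [Subgroup.coe_mul, Prod.fst_mul, Subgroup.coe_inv, Prod.fst_inv, e1, inv_mul_cancel]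
      rw [e3]
      simpa using ha)
  -- the linear functional
  let φ : (Matrix (Fin 2 × Fin 2) (Fin 2 × Fin 2) ℝ × Matrix (Fin 2 × Fin 2) (Fin 2 × Fin 2) ℝ)
      →ₗ[ℝ] ℝ := (Matrix.traceLinearMap _ ℝ ℝ).comp (LinearMap.fst ℝ _ _) -
        (Matrix.traceLinearMap _ ℝ ℝ).comp (LinearMap.snd ℝ _ _)
  have hφ : ∀ q : SL2R × SL2R, φ (auxR q) = (q.1 : Matrix (Fin 2) (Fin 2) ℝ).trace ^ 2 -
      (q.2 : Matrix (Fin 2) (Fin 2) ℝ).trace ^ 2 := by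
    intro q
    simp [φ, auxR, Matrix.trace_kronecker, pow_two]
  have hell : ∀ q ∈ auxH ρ₁ ρ₂, |(q.1 : Matrix (Fin 2) (Fin 2) ℝ).trace| < 2 → φ (auxR q) = 0 := by
    rintro q ⟨γ, h1, h2⟩ hq
    have := aux_rot_absTrace q.1 q.2 hq (by rw [h1, h2, h_rot])
    rw [hφ, sub_eq_zero]
    exact sq_eq_sq_iff_abs_eq_abs _ _ |>.2 this
  obtain ⟨g, hg, hgt⟩ := aux_exists_ell ρ₁.range hE hD
  obtain ⟨h₀, hh₀⟩ := hlift g hg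
  have ho : IsOpen {N : Matrix (Fin 2) (Fin 2) ℝ |
      |((g : Matrix (Fin 2) (Fin 2) ℝ) * N).trace| < 2} :=
    isOpen_lt (by fun_prop) continuous_const
  obtain ⟨b, hb, hbsub⟩ := Metric.isOpen_iff.1 ho 1 (by simpa using hgt)
  let ψ := φ.comp (LinearMap.mulLeft ℝ (auxR (h₀ : SL2R × SL2R)))
  have hψ : ∀ x : auxH ρ₁ ρ₂, ψ (auxR (x : SL2R × SL2R)) = φ (auxR ((h₀ : SL2R × SL2R) * x)) := by
    intro x
    simp [ψ]
  have hle : Submodule.span ℝ ((auxR.comp (auxH ρ₁ ρ₂).subtype) '' S (min a b)) ≤ ψ.ker := by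
    rw [Submodule.span_le]
    rintro _ ⟨x, hx, rfl⟩
    change ψ (auxR (x : SL2R × SL2R)) = 0
    rw [hψ]
    refine hell _ ((auxH ρ₁ ρ₂).mul_mem h₀.2 x.2) ?_
    rw [Prod.fst_mul, Matrix.SpecialLinearGroup.coe_mul, hh₀]
    exact hbsub (Metric.ball_subset_ball (min_le_right _ _) hx)
  have hfin := hle (hspan (min a b) (lt_min ha hb) (min_le_left _ _) (h₀⁻¹ * ⟨p, hp⟩))
  have hfin' : ψ (auxR ((h₀⁻¹ * ⟨p, hp⟩ : auxH ρ₁ ρ₂) : SL2R × SL2R)) = 0 := hfin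
  rw [hψ] at hfin'
  have e : (h₀ : SL2R × SL2R) * ((h₀⁻¹ * ⟨p, hp⟩ : auxH ρ₁ ρ₂) : SL2R × SL2R) = p := by
    simp
  rw [e, hφ] at hfin'
  linarith

end MainAux

/-- If `ρ₁(Γ)` is non elementary and non discrete, and `ρ₁, ρ₂` have the same rotation numbers
elementwise, then `|tr(ρ₁(γ))| = |tr(ρ₂(γ))|` for every `γ ∈ Γ`. -/
theorem absTrace_eq_of_rot_eq {Γ : Type*} [Group Γ] (ρ₁ ρ₂ : Γ →* PSL2R)
    (h_nonelem : ¬ IsElementary ρ₁.range)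
    (h_nondisc : ¬ IsDiscreteSubgroup ρ₁.range)
    (h_rot : ∀ γ : Γ, rot (ρ₁ γ) = rot (ρ₂ γ)) :
    ∀ γ : Γ, absTrace (ρ₁ γ) = absTrace (ρ₂ γ) := by
  intro γ
  obtain ⟨A, hA⟩ := QuotientGroup.mk_surjective (ρ₁ γ)
  obtain ⟨B, hB⟩ := QuotientGroup.mk_surjective (ρ₂ γ)
  have := aux_main ρ₁ ρ₂ h_nonelem h_nondisc h_rot (A, B) ⟨γ, hA, hB⟩
  rw [← hA, ← hB, aux_absTrace, aux_absTrace]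
  exact (sq_eq_sq_iff_abs_eq_abs _ _).1 this
end

section
/- Let Γ be a group and let ρ₁, ρ₂ : Γ → PSL(2,ℝ) be group homomorphisms such that ρ₁(Γ) is non-elementary and |tr(ρ₁(γ))| = |tr(ρ₂(γ))| for every γ ∈ Γ. Then there exists a matrix g ∈ GL(2,ℝ) such that, for every γ ∈ Γ, conjugating a representative matrix of ρ₁(γ) by g yields, up to sign and up to a positive scalar, a representative matrix of ρ₂(γ); that is, ρ₁ and ρ₂ are conjugate by an element of PGL(2,ℝ), equivalently by an isometry (possibly orientation-reversing) of the hyperbolic plane ℍ². -/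
/-!
`PSL2R` is `PSL(2,ℝ) = SL(2,ℝ)/{±1}`, realized as the quotient of `SL(2,ℝ)` by its center.
-/

open Matrix Real

/-- The adjoint action of a 2×2 matrix on traceless matrices `[[x,y],[z,-x]]`, in coordinates. -/
def adM (A : Matrix (Fin 2) (Fin 2) ℝ) : Matrix (Fin 3) (Fin 3) ℝ :=
  !![A 0 0 * A 1 1 + A 0 1 * A 1 0, - (A 0 0 * A 1 0), A 0 1 * A 1 1;
     -2 * (A 0 0 * A 0 1), A 0 0 ^ 2, - A 0 1 ^ 2;
     2 * (A 1 0 * A 1 1), - A 1 0 ^ 2, A 1 1 ^ 2]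

/-- The traceless matrix with given coordinates. -/
def mOf (v : Fin 3 → ℝ) : Matrix (Fin 2) (Fin 2) ℝ := !![v 0, v 1; v 2, - v 0]

/-- The trace form. -/
def Jm : Matrix (Fin 3) (Fin 3) ℝ := !![2, 0, 0; 0, 0, 1; 0, 1, 0]

/-- Inverse of the trace form. -/
noncomputable def Km : Matrix (Fin 3) (Fin 3) ℝ := !![1/2, 0, 0; 0, 0, 1; 0, 1, 0]

lemma Jm_Km : Jm * Km = 1 := by
  ext i j; fin_cases i <;> fin_cases j <;> simp [Jm, Km, Matrix.mul_apply, Fin.sum_univ_three]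

lemma Km_Jm : Km * Jm = 1 := by
  ext i j; fin_cases i <;> fin_cases j <;> simp [Jm, Km, Matrix.mul_apply, Fin.sum_univ_three]

lemma adM_one : adM 1 = 1 := by
  ext i j; fin_cases i <;> fin_cases j <;> simp [adM]

lemma adM_mul (A B : Matrix (Fin 2) (Fin 2) ℝ) : adM (A * B) = adM A * adM B := by
  ext i j; fin_cases i <;> fin_cases j <;>
    simp [adM, Matrix.mul_apply, Fin.sum_univ_three, Fin.sum_univ_two] <;> ring

lemma adM_smul (c : ℝ) (A : Matrix (Fin 2) (Fin 2) ℝ) : adM (c • A) = c ^ 2 • adM A := by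
  ext i j; fin_cases i <;> fin_cases j <;> simp [adM] <;> ring

lemma mOf_adM (A : Matrix (Fin 2) (Fin 2) ℝ) (v : Fin 3 → ℝ) :
    mOf (adM A *ᵥ v) = A * mOf v * A.adjugate := by
  rw [Matrix.adjugate_fin_two]
  ext i j; fin_cases i <;> fin_cases j <;>
    simp [adM, mOf, Matrix.mul_apply, Matrix.mulVec, dotProduct, Fin.sum_univ_three,
      Fin.sum_univ_two] <;> ring

lemma adM_J (A : Matrix (Fin 2) (Fin 2) ℝ) : (adM A)ᵀ * Jm * adM A = A.det ^ 2 • Jm := by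
  rw [Matrix.det_fin_two]
  ext i j; fin_cases i <;> fin_cases j <;>
    simp [adM, Jm, Matrix.mul_apply, Fin.sum_univ_three] <;> ring

lemma adM_trace (A : Matrix (Fin 2) (Fin 2) ℝ) (h : A.det = 1) :
    (adM A).trace = A.trace ^ 2 - 1 := by
  rw [← h, Matrix.det_fin_two]
  simp [adM, Matrix.trace, Fin.sum_univ_three, Fin.sum_univ_two]; ring

/-- Adjoint representation of `SL(2,ℝ)`. -/
def adSL : SL2R →* Matrix (Fin 3) (Fin 3) ℝ where
  toFun A := adM A
  map_one' := by simpa using adM_one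
  map_mul' A B := by simpa using adM_mul A B

lemma center_eq {A : SL2R} (h : A ∈ Subgroup.center SL2R) :
    (A : Matrix (Fin 2) (Fin 2) ℝ) = 1 ∨ (A : Matrix (Fin 2) (Fin 2) ℝ) = -1 := by
  rw [Matrix.SpecialLinearGroup.mem_center_iff] at h
  obtain ⟨r, hr, h⟩ := h
  simp only [Fintype.card_fin] at hr
  rcases (show r = 1 ∨ r = -1 from by simpa using hr) with h1 | h1 <;> subst h1 <;> [left; right] <;> rw [← h] <;>
    ext i j <;> fin_cases i <;> fin_cases j <;> simp

lemma neg_one_mem_center : (-1 : SL2R) ∈ Subgroup.center SL2R := by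
  rw [Subgroup.mem_center_iff]; intro g; simp

lemma mk_neg (A : SL2R) : (QuotientGroup.mk (-A) : PSL2R) = QuotientGroup.mk A := by
  rw [QuotientGroup.eq]
  have : (-A)⁻¹ * A = -1 := by
    rw [inv_mul_eq_iff_eq_mul]; simp
  rw [this]; exact neg_one_mem_center

/-- Adjoint representation of `PSL(2,ℝ)`. -/
def adPSL : PSL2R →* Matrix (Fin 3) (Fin 3) ℝ :=
  QuotientGroup.lift (Subgroup.center SL2R) adSL (by
    intro A hA
    change adM A = 1
    rcases center_eq hA with h | h <;> rw [h]
    · exact adM_one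
    · have := adM_smul (-1) 1
      simpa [adM_one] using this)

lemma adPSL_mk (A : SL2R) : adPSL (QuotientGroup.mk A) = adM A := rfl

lemma adPSL_trace (x : PSL2R) : (adPSL x).trace = absTrace x ^ 2 - 1 := by
  have : x = QuotientGroup.mk (Quotient.out x : SL2R) := (QuotientGroup.out_eq' x).symm
  conv_lhs => rw [this]
  rw [adPSL_mk, adM_trace _ (Quotient.out x : SL2R).prop, absTrace, sq_abs]

lemma skolem_mat {n : ℕ} (Φ : Matrix (Fin n) (Fin n) ℝ ≃ₐ[ℝ] Matrix (Fin n) (Fin n) ℝ) :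
    ∃ T : Matrix (Fin n) (Fin n) ℝ, IsUnit T.det ∧ ∀ X, T * X = Φ X * T := by
  let e : Matrix (Fin n) (Fin n) ℝ ≃ₐ[ℝ] Module.End ℝ (Fin n → ℝ) := Matrix.toLinAlgEquiv'
  obtain ⟨T, hT⟩ := ((e.symm.trans Φ).trans e).eq_linearEquivConjAlgEquiv
  refine ⟨e.symm T.toLinearMap, ?_, fun X => ?_⟩
  · rw [← Matrix.isUnit_iff_isUnit_det]
    refine IsUnit.map e.symm ?_
    exact (Module.End.isUnit_iff _).mpr T.bijective
  · apply e.injective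
    rw [map_mul, map_mul, e.apply_symm_apply]
    have h := AlgEquiv.congr_fun hT (e X)
    simp only [AlgEquiv.trans_apply, e.symm_apply_apply] at h
    rw [h]
    ext v
    simp

open Module in
/-- Reps with same trace, first one spanning everything, are conjugate. -/
lemma conj_of_trace {Γ : Type*} [Group Γ] {n : ℕ} (r₁ r₂ : Γ →* Matrix (Fin n) (Fin n) ℝ)
    (hs : Submodule.span ℝ (Set.range r₁) = ⊤)
    (ht : ∀ γ, (r₁ γ).trace = (r₂ γ).trace) :
    ∃ T : Matrix (Fin n) (Fin n) ℝ, IsUnit T.det ∧ ∀ γ, T * r₁ γ = r₂ γ * T := by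
  let R := MonoidAlgebra ℝ Γ
  let f₁ : R →ₐ[ℝ] Matrix (Fin n) (Fin n) ℝ := MonoidAlgebra.lift ℝ _ Γ r₁
  let f₂ : R →ₐ[ℝ] Matrix (Fin n) (Fin n) ℝ := MonoidAlgebra.lift ℝ _ Γ r₂
  have e₁ : ∀ γ, f₁ (MonoidAlgebra.of ℝ Γ γ) = r₁ γ := fun γ => MonoidAlgebra.lift_of _ _
  have e₂ : ∀ γ, f₂ (MonoidAlgebra.of ℝ Γ γ) = r₂ γ := fun γ => MonoidAlgebra.lift_of _ _
  have htr : ∀ a : R, (f₁ a).trace = (f₂ a).trace := by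
    intro a
    induction a using MonoidAlgebra.induction_on with
    | of g => rw [e₁, e₂, ht]
    | add a b ha hb => simp [ha, hb]
    | smul c a ha => simp [ha]
  have hsurj : Function.Surjective f₁ := by
    rw [← AlgHom.coe_toLinearMap, ← LinearMap.range_eq_top, eq_top_iff, ← hs, Submodule.span_le]
    rintro _ ⟨γ, rfl⟩
    exact ⟨_, e₁ γ⟩
  have hker : ∀ a, f₂ a = 0 → f₁ a = 0 := by
    intro a ha
    apply (Matrix.ext_iff_trace_mul_right).mpr
    intro X
    obtain ⟨b, rfl⟩ := hsurj X
    rw [← map_mul, htr, map_mul, ha]; simp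
  -- a linear section
  obtain ⟨s, hsec⟩ := f₁.toLinearMap.exists_rightInverse_of_surjective
    (LinearMap.range_eq_top.mpr hsurj)
  have hsec' : ∀ X, f₁ (s X) = X := fun X => LinearMap.congr_fun hsec X
  let φ : Matrix (Fin n) (Fin n) ℝ →ₗ[ℝ] Matrix (Fin n) (Fin n) ℝ := f₂.toLinearMap ∘ₗ s
  have hφinj : Function.Injective φ := by
    rw [← LinearMap.ker_eq_bot, LinearMap.ker_eq_bot']
    intro X hX
    rw [← hsec' X]; exact hker _ hX
  have hφsurj : Function.Surjective φ := LinearMap.injective_iff_surjective.mp hφinj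
  have hsurj₂ : Function.Surjective f₂ := fun Y => by
    obtain ⟨X, hX⟩ := hφsurj Y
    exact ⟨s X, hX⟩
  have hker' : ∀ a, f₁ a = 0 → f₂ a = 0 := by
    intro a ha
    apply (Matrix.ext_iff_trace_mul_right).mpr
    intro X
    obtain ⟨b, rfl⟩ := hsurj₂ X
    rw [← map_mul, ← htr, map_mul, ha]; simp
  have hφ : ∀ a, φ (f₁ a) = f₂ a := by
    intro a
    have : f₁ (s (f₁ a) - a) = 0 := by rw [map_sub, hsec', sub_self]
    have := hker' _ this
    rw [map_sub, sub_eq_zero] at this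
    exact this
  let Φ : Matrix (Fin n) (Fin n) ℝ →ₐ[ℝ] Matrix (Fin n) (Fin n) ℝ :=
    AlgHom.ofLinearMap φ (by have := hφ 1; rwa [map_one f₁, map_one f₂] at this) (by
      intro X Y
      obtain ⟨a, rfl⟩ := hsurj X
      obtain ⟨b, rfl⟩ := hsurj Y
      rw [← map_mul, hφ, hφ, hφ, map_mul])
  have := skolem_mat (AlgEquiv.ofBijective Φ ⟨hφinj, hφsurj⟩)
  obtain ⟨T, hT, h⟩ := this
  refine ⟨T, hT, fun γ => ?_⟩
  rw [h, ← e₁, ← e₂, ← hφ]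
  rfl

lemma cubic_root (A : Matrix (Fin 3) (Fin 3) ℝ) : ∃ c : ℝ, (A - c • (1 : Matrix (Fin 3) (Fin 3) ℝ)).det = 0 := by
  obtain ⟨a, b, d, h⟩ : ∃ a b d : ℝ, ∀ c : ℝ,
      (A - c • (1 : Matrix (Fin 3) (Fin 3) ℝ)).det = -c ^ 3 + a * c ^ 2 + b * c + d := by
    refine ⟨A 0 0 + A 1 1 + A 2 2, A 0 1 * A 1 0 + A 0 2 * A 2 0 + A 1 2 * A 2 1
      - A 0 0 * A 1 1 - A 0 0 * A 2 2 - A 1 1 * A 2 2, A.det, fun c => ?_⟩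
    simp [Matrix.det_fin_three]
    ring
  simp_rw [h]
  set M := 1 + |a| + |b| + |d| with hM
  have ha := abs_nonneg a
  have hb := abs_nonneg b
  have hd := abs_nonneg d
  have hM1 : 1 ≤ M := by linarith
  have hM2 : M ≤ M ^ 2 := by nlinarith
  have hM0 : 1 ≤ M ^ 2 := by nlinarith
  have key : ∀ (x : ℝ), x ^ 2 = M ^ 2 → |x| = M → |a * x ^ 2 + b * x + d| ≤ M ^ 3 := by
    intro x hx hx'
    calc |a * x ^ 2 + b * x + d| ≤ |a * x ^ 2| + |b * x| + |d| := by
          refine (abs_add_le _ _).trans ?_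
          gcongr
          exact abs_add_le _ _
      _ = |a| * M ^ 2 + |b| * M + |d| := by rw [abs_mul, abs_mul, hx, hx', abs_of_nonneg (by positivity : 0 ≤ M ^ 2)]
      _ ≤ |a| * M ^ 2 + |b| * M ^ 2 + |d| * M ^ 2 := by
          gcongr
          nlinarith
      _ ≤ M * M ^ 2 := by rw [← add_mul, ← add_mul]; gcongr; linarith
      _ = M ^ 3 := by ring
  have k1 := key M rfl (abs_of_nonneg (by linarith))
  have k2 := key (-M) (by ring) (by rw [abs_neg, abs_of_nonneg (by linarith)])
  rw [abs_le] at k1 k2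
  have hc : Continuous (fun c : ℝ => -c ^ 3 + a * c ^ 2 + b * c + d) := by fun_prop
  have := mem_range_of_exists_le_of_exists_ge hc (c := 0) ⟨M, by linarith [k1.2]⟩
    ⟨-M, by
      have : (-M) ^ 3 = - M ^ 3 := by ring
      rw [this]; linarith [k2.1]⟩
  exact this

lemma burnside3 {Γ : Type*} [Group Γ] (r : Γ →* Matrix (Fin 3) (Fin 3) ℝ)
    (irr : ∀ P : Submodule ℝ (Fin 3 → ℝ), (∀ γ, ∀ v ∈ P, r γ *ᵥ v ∈ P) → P = ⊥ ∨ P = ⊤) :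
    Submodule.span ℝ (Set.range r) = ⊤ := by
  let e : Matrix (Fin 3) (Fin 3) ℝ ≃ₐ[ℝ] Module.End ℝ (Fin 3 → ℝ) := Matrix.toLinAlgEquiv'
  have he : ∀ X v, e X v = X *ᵥ v := fun X v => rfl
  let A : Subalgebra ℝ (Matrix (Fin 3) (Fin 3) ℝ) := Algebra.adjoin ℝ (Set.range r)
  let S : Subalgebra ℝ (Module.End ℝ (Fin 3 → ℝ)) := A.map e.toAlgHom
  have hrA : ∀ γ, r γ ∈ A := fun γ => Algebra.subset_adjoin ⟨γ, rfl⟩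
  have hrS : ∀ γ, e (r γ) ∈ S := fun γ => ⟨r γ, hrA γ, rfl⟩
  have hA : Subalgebra.toSubmodule A = Submodule.span ℝ (Set.range r) := by
    rw [Algebra.adjoin_eq_span]
    congr 1
    exact congrArg _ (Submonoid.closure_eq (MonoidHom.mrange r))
  have hsimple : IsSimpleModule S (Fin 3 → ℝ) := by
    rw [isSimpleModule_iff]
    refine { exists_pair_ne := ⟨⊥, ⊤, bot_ne_top⟩, eq_bot_or_eq_top := fun P => ?_ }
    rcases irr (P.restrictScalars ℝ) (fun γ v hv => P.smul_mem ⟨_, hrS γ⟩ hv) with h | h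
    · left; simpa using h
    · right; simpa using h
  have hcomm : ∀ f : Module.End S (Fin 3 → ℝ), ∃ c : ℝ, ∀ v, f v = c • v := by
    intro f
    let g : Module.End ℝ (Fin 3 → ℝ) := f.restrictScalars ℝ
    obtain ⟨c, hc⟩ := cubic_root (e.symm g)
    obtain ⟨v, hv0, hv⟩ := Matrix.exists_mulVec_eq_zero_iff.mpr hc
    have hgv : ∀ v, (e.symm g) *ᵥ v = f v := by
      intro v; rw [← he, e.apply_symm_apply]; rfl
    rw [Matrix.sub_mulVec, hgv, Matrix.smul_mulVec, Matrix.one_mulVec, sub_eq_zero] at hv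
    rcases irr (LinearMap.ker (g - c • LinearMap.id)) (by
      intro γ v hv
      rw [LinearMap.mem_ker, LinearMap.sub_apply, sub_eq_zero] at hv ⊢
      have h1 : f (r γ *ᵥ v) = r γ *ᵥ (f v) := f.map_smul ⟨_, hrS γ⟩ v
      have h2 : f v = c • v := hv
      change f (r γ *ᵥ v) = c • (r γ *ᵥ v)
      rw [h1, h2, Matrix.mulVec_smul]) with h | h
    · exfalso; apply hv0
      have : v ∈ LinearMap.ker (g - c • LinearMap.id) := by
        rw [LinearMap.mem_ker, LinearMap.sub_apply, sub_eq_zero]; exact hv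
      rw [h] at this; simpa using this
    · refine ⟨c, fun v => ?_⟩
      have : v ∈ LinearMap.ker (g - c • LinearMap.id) := by rw [h]; trivial
      rw [LinearMap.mem_ker, LinearMap.sub_apply, sub_eq_zero] at this; exact this
  rw [← hA, eq_top_iff]
  rintro X -
  let F : Module.End (Module.End S (Fin 3 → ℝ)) (Fin 3 → ℝ) :=
    { toFun := fun v => X *ᵥ v
      map_add' := fun v w => Matrix.mulVec_add _ _ _
      map_smul' := fun f v => by
        obtain ⟨c, hc⟩ := hcomm f
        simp only [Module.End.smul_def, hc, Matrix.mulVec_smul, RingHom.id_apply] }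
  obtain ⟨s, hs⟩ := jacobson_density (R := S) (M := Fin 3 → ℝ) F (Finset.univ.image (fun i : Fin 3 => Pi.single i (1 : ℝ)))
  obtain ⟨_, Y, hY, rfl⟩ := s
  have : X = Y := by
    ext i j
    have := hs (Pi.single j 1) (by simp)
    have := congrFun this i
    change (X *ᵥ _) i = (Y *ᵥ _) i at this
    simpa using this
  rw [this]; exact hY

lemma quad_inv {R : Type*} [CommRing R] {a b c d x y z l w₀ w₁ : R} (hd : a * d - b * c = 1)
    (h0 : (a * d + b * c) * x - a * c * y + b * d * z = l * x)
    (h1 : -2 * (a * b) * x + a ^ 2 * y - b ^ 2 * z = l * y)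
    (h2 : 2 * (c * d) * x - c ^ 2 * y + d ^ 2 * z = l * z) :
    l * (z * (a * w₀ + b * w₁) ^ 2 - 2 * x * (a * w₀ + b * w₁) * (c * w₀ + d * w₁)
      - y * (c * w₀ + d * w₁) ^ 2) = z * w₀ ^ 2 - 2 * x * w₀ * w₁ - y * w₁ ^ 2 := by
  linear_combination (-(a * w₀ + b * w₁) ^ 2) * h2
    + 2 * (a * w₀ + b * w₁) * (c * w₀ + d * w₁) * h0 + (c * w₀ + d * w₁) ^ 2 * h1
    + (z * w₀ ^ 2 - 2 * x * w₀ * w₁ - y * w₁ ^ 2) * (a * d - b * c + 1) * hd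

lemma quad_roots {x y z : ℝ} (hne : ¬ (x = 0 ∧ y = 0 ∧ z = 0)) (hdisc : 0 ≤ x ^ 2 + y * z) :
    ∃ u u' : Fin 2 → ℝ, u ≠ 0 ∧ u' ≠ 0 ∧ (z * u 0 ^ 2 - 2 * x * u 0 * u 1 - y * u 1 ^ 2 = 0) ∧
      ∀ w : Fin 2 → ℝ, z * w 0 ^ 2 - 2 * x * w 0 * w 1 - y * w 1 ^ 2 = 0 →
        (u 0 * w 1 - u 1 * w 0 = 0 ∨ u' 0 * w 1 - u' 1 * w 0 = 0) := by
  by_cases hz : z = 0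
  · subst hz
    refine ⟨![1, 0], ![-y, 2 * x], ?_, ?_, by simp, ?_⟩
    · intro h; have := congrFun h 0; simp at this
    · intro h; apply hne
      have h0 := congrFun h 0
      have h1 := congrFun h 1
      simp at h0 h1
      exact ⟨h1, h0, rfl⟩
    · intro w hw
      have : w 1 * (-y * w 1 - 2 * x * w 0) = 0 := by linear_combination hw
      simpa using this
  · set r := Real.sqrt (x ^ 2 + y * z)
    have hr : r ^ 2 = x ^ 2 + y * z := Real.sq_sqrt hdisc
    refine ⟨![x + r, z], ![x - r, z], ?_, ?_, ?_, ?_⟩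
    · intro h; have := congrFun h 1; simp at this; exact hz this
    · intro h; have := congrFun h 1; simp at this; exact hz this
    · simp; linear_combination z * hr
    · intro w hw
      have : ((x + r) * w 1 - z * w 0) * ((x - r) * w 1 - z * w 0) = 0 := by
        linear_combination z * hw - (w 1) ^ 2 * hr
      simpa using this

lemma mk_eq_of_det {u w : Fin 2 → ℝ} (hu : u ≠ 0) (hw : w ≠ 0)
    (h : u 0 * w 1 - u 1 * w 0 = 0) :
    Projectivization.mk ℝ w hw = Projectivization.mk ℝ u hu := by
  rw [Projectivization.mk_eq_mk_iff']
  by_cases h0 : u 0 = 0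
  · have h1 : u 1 ≠ 0 := fun h1 => hu (by ext i; fin_cases i <;> simp [h0, h1])
    refine ⟨w 1 / u 1, ?_⟩
    ext i; fin_cases i
    · simp only [h0] at h
      have : w 0 = 0 := by
        have : u 1 * w 0 = 0 := by linarith
        simpa [h1] using this
      simp [h0, this]
    · simp [h1]
  · refine ⟨w 0 / u 0, ?_⟩
    ext i; fin_cases i
    · simp [h0]
    · simp; field_simp; linarith

lemma no_inv_line {G : Subgroup PSL2R} (hG : ¬ IsElementary G) (v : Fin 3 → ℝ) (hv : v ≠ 0)
    (hinv : ∀ g : SL2R, (QuotientGroup.mk g : PSL2R) ∈ G → ∃ l : ℝ, adM g *ᵥ v = l • v) :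
    False := by
  apply hG
  obtain ⟨x, y, z, hxyz⟩ : ∃ x y z, v = ![x, y, z] := ⟨v 0, v 1, v 2, by
    ext i; fin_cases i <;> rfl⟩
  have hne : ¬ (x = 0 ∧ y = 0 ∧ z = 0) := by
    rintro ⟨rfl, rfl, rfl⟩; apply hv; rw [hxyz]; ext i; fin_cases i <;> rfl
  have key : ∀ g : SL2R, (QuotientGroup.mk g : PSL2R) ∈ G → ∃ l : ℝ, l ≠ 0 ∧
      (g 0 0 * g 1 1 - g 0 1 * g 1 0 = 1) ∧
      ((g 0 0 * g 1 1 + g 0 1 * g 1 0) * x - g 0 0 * g 1 0 * y + g 0 1 * g 1 1 * z = l * x) ∧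
      (-2 * (g 0 0 * g 0 1) * x + g 0 0 ^ 2 * y - g 0 1 ^ 2 * z = l * y) ∧
      (2 * (g 1 0 * g 1 1) * x - g 1 0 ^ 2 * y + g 1 1 ^ 2 * z = l * z) := by
    intro g hg
    obtain ⟨l, hl⟩ := hinv g hg
    refine ⟨l, ?_, ?_, ?_⟩
    · rintro rfl
      apply hv
      have h1 : adM (g⁻¹ : SL2R) * adM g = 1 := by
        rw [← adM_mul, ← Matrix.SpecialLinearGroup.coe_mul]; simp [adM_one]
      rw [← Matrix.one_mulVec v, ← h1, ← Matrix.mulVec_mulVec, hl]; simp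
    · have := g.prop; rw [Matrix.det_fin_two] at this; exact this
    · subst hxyz
      have h0 := congrFun hl 0
      have h1 := congrFun hl 1
      have h2 := congrFun hl 2
      simp [adM, Matrix.mulVec, dotProduct, Fin.sum_univ_three] at h0 h1 h2
      refine ⟨?_, ?_, ?_⟩
      · linear_combination h0
      · linear_combination h1
      · linear_combination h2
  rcases le_or_gt 0 (x ^ 2 + y * z) with hdisc | hdisc
  · right
    obtain ⟨u, u', hu, hu', hQ, hroots⟩ := quad_roots hne hdisc
    refine ⟨Projectivization.mk ℝ u hu, Set.Finite.subset
      (Set.toFinite {Projectivization.mk ℝ u hu, Projectivization.mk ℝ u' hu'}) ?_⟩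
    rintro q ⟨g, hg, rfl⟩
    obtain ⟨l, hl, hd, h0, h1, h2⟩ := key g hg
    have hQ' := quad_inv (w₀ := u 0) (w₁ := u 1) hd h0 h1 h2
    rw [hQ] at hQ'
    have e : boundaryAct g (Projectivization.mk ℝ u hu) = Projectivization.mk ℝ
      ((g : Matrix (Fin 2) (Fin 2) ℝ) *ᵥ u) (fun h => hu (by
        have : ((g⁻¹ : SL2R) : Matrix (Fin 2) (Fin 2) ℝ) * (g : Matrix (Fin 2) (Fin 2) ℝ) = 1 := by
          rw [← Matrix.SpecialLinearGroup.coe_mul]; simp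
        rw [← Matrix.one_mulVec u, ← this, ← Matrix.mulVec_mulVec, h]; simp)) := rfl
    rw [e]
    have := hroots ((g : Matrix (Fin 2) (Fin 2) ℝ) *ᵥ u) (by
      simp only [Matrix.mulVec, dotProduct, Fin.sum_univ_two]
      exact (mul_eq_zero.mp hQ').resolve_left hl)
    rcases this with h | h
    · left; exact mk_eq_of_det _ _ h
    · right; exact mk_eq_of_det _ _ h
  · left
    have hz : z ≠ 0 := by rintro rfl; nlinarith [sq_nonneg x]
    set s := Real.sqrt (-(x ^ 2 + y * z)) with hs
    have hs2 : s ^ 2 = -(x ^ 2 + y * z) := Real.sq_sqrt (by linarith)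
    have hspos : 0 < s := Real.sqrt_pos.mpr (by linarith)
    let τ : UpperHalfPlane := ⟨⟨x / z, s / |z|⟩, by
      have := abs_pos.mpr hz
      simp only; positivity⟩
    have hτ : (z : ℂ) * (τ : ℂ) ^ 2 - 2 * x * (τ : ℂ) * 1 - y * 1 ^ 2 = 0 := by
      have e : (τ : ℂ) = ⟨x / z, s / |z|⟩ := rfl
      rw [e]
      have ha : |z| ^ 2 = z ^ 2 := sq_abs z
      have hz' := abs_ne_zero.mpr hz
      apply Complex.ext
      · simp [pow_two]
        field_simp
        rw [ha, hs2]; ring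
      · simp [pow_two]
        field_simp
        ring
    refine ⟨τ, Set.Finite.subset (Set.toFinite {τ}) ?_⟩
    rintro w ⟨g, hg, rfl⟩
    obtain ⟨l, hl, hd, h0, h1, h2⟩ := key g hg
    have hQ' := quad_inv (R := ℂ) (w₀ := (τ : ℂ)) (w₁ := 1) (a := (g 0 0 : ℝ)) (b := (g 0 1 : ℝ))
      (c := (g 1 0 : ℝ)) (d := (g 1 1 : ℝ)) (x := (x : ℂ)) (y := (y : ℂ)) (z := (z : ℂ)) (l := (l : ℂ))
      (by exact_mod_cast hd) (by exact_mod_cast h0) (by exact_mod_cast h1) (by exact_mod_cast h2)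
    rw [hτ] at hQ'
    have hQ'' := (mul_eq_zero.mp hQ').resolve_left (by exact_mod_cast hl)
    have hw : ((g • τ : UpperHalfPlane) : ℂ) =
      ((g 0 0 : ℝ) * (τ : ℂ) + (g 0 1 : ℝ)) / ((g 1 0 : ℝ) * (τ : ℂ) + (g 1 1 : ℝ)) :=
      UpperHalfPlane.coe_specialLinearGroup_apply g τ
    have hden : ((g 1 0 : ℝ) * (τ : ℂ) + (g 1 1 : ℝ)) ≠ 0 := by
      intro h
      rw [h, div_zero] at hw
      have := (g • τ).im_pos
      rw [← UpperHalfPlane.coe_im, hw] at this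
      simp at this
    set W := ((g • τ : UpperHalfPlane) : ℂ) with hWdef
    have hnum : ((g 0 0 : ℝ) * (τ : ℂ) + (g 0 1 : ℝ)) = W * ((g 1 0 : ℝ) * (τ : ℂ) + (g 1 1 : ℝ)) := by
      rw [hw, div_mul_cancel₀ _ hden]
    rw [mul_one, mul_one, hnum] at hQ''
    have hW : (z : ℂ) * W ^ 2 - 2 * x * W - y = 0 := by
      have : ((g 1 0 : ℝ) * (τ : ℂ) + (g 1 1 : ℝ)) ^ 2 * ((z : ℂ) * W ^ 2 - 2 * x * W - y) = 0 := by
        linear_combination hQ''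
      exact (mul_eq_zero.mp this).resolve_left (pow_ne_zero _ hden)
    have hprod : (W - τ) * (z * (W + τ) - 2 * x) = 0 := by linear_combination hW - hτ
    rw [Set.mem_singleton_iff]
    apply UpperHalfPlane.ext
    rcases mul_eq_zero.mp hprod with h | h
    · exact sub_eq_zero.mp h
    · exfalso
      have him := congrArg Complex.im h
      simp at him
      have h1 : 0 < W.im := (g • τ).im_pos
      have h2 := τ.im_pos
      rcases him with h3 | h3
      · exact hz h3
      · linarith

lemma irr_of_nonelem {Γ : Type*} [Group Γ] (ρ : Γ →* PSL2R) (hG : ¬ IsElementary ρ.range)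
    (P : Submodule ℝ (Fin 3 → ℝ)) (hP : ∀ γ, ∀ v ∈ P, adPSL (ρ γ) *ᵥ v ∈ P) : P = ⊥ ∨ P = ⊤ := by
  have one : ∀ P : Submodule ℝ (Fin 3 → ℝ), (∀ γ, ∀ v ∈ P, adPSL (ρ γ) *ᵥ v ∈ P) →
      Module.finrank ℝ P ≠ 1 := by
    intro P hP h1
    obtain ⟨⟨v, hvP⟩, hv0, hv⟩ := finrank_eq_one_iff'.mp h1
    refine no_inv_line hG v (fun h => hv0 (by simpa using h)) ?_
    rintro g ⟨γ, hγ⟩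
    have := hP γ v hvP
    rw [hγ, adPSL_mk] at this
    obtain ⟨l, hl⟩ := hv ⟨_, this⟩
    exact ⟨l, (congrArg Subtype.val hl).symm⟩
  have hJ : (Matrix.toBilin' Jm).Nondegenerate :=
    LinearMap.BilinForm.nondegenerate_toBilin'_of_det_ne_zero' _ (by
      simp [Jm, Matrix.det_fin_three])
  have hPo : ∀ γ, ∀ v ∈ (Matrix.toBilin' Jm).orthogonal P,
      adPSL (ρ γ) *ᵥ v ∈ (Matrix.toBilin' Jm).orthogonal P := by
    intro γ v hv p hp
    have h1 := hv _ (hP γ⁻¹ p hp)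
    simp only [Matrix.toBilin'_apply'] at h1 ⊢
    obtain ⟨A, hA⟩ := QuotientGroup.mk_surjective (ρ γ)
    have hAinv : adPSL (ρ γ) * adPSL (ρ γ⁻¹) = 1 := by
      rw [← map_mul, ← map_mul]; simp
    have hJA : (adPSL (ρ γ))ᵀ * Jm * adPSL (ρ γ) = Jm := by
      rw [← hA, adPSL_mk, adM_J, A.prop]; simp
    have e : p = adPSL (ρ γ) *ᵥ (adPSL (ρ γ⁻¹) *ᵥ p) := by
      rw [Matrix.mulVec_mulVec, hAinv, Matrix.one_mulVec]
    rw [e]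
    generalize adPSL (ρ γ⁻¹) *ᵥ p = p' at h1 ⊢
    rw [← hJA] at h1
    rw [← Matrix.mulVec_mulVec, ← Matrix.mulVec_mulVec, Matrix.dotProduct_mulVec,
      Matrix.vecMul_transpose] at h1
    exact h1
  have hfin := LinearMap.BilinForm.finrank_orthogonal hJ P
  have h3 : Module.finrank ℝ (Fin 3 → ℝ) = 3 := by simp
  have hle := Submodule.finrank_le P
  rw [h3] at hle hfin
  have a1 := one P hP
  have a2 := one _ hPo
  have : Module.finrank ℝ P = 0 ∨ Module.finrank ℝ P = 3 := by omega
  rcases this with h | h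
  · left; exact Submodule.finrank_eq_zero.mp h
  · right; exact Submodule.eq_top_of_finrank_eq (by rw [h, h3])

/-- Coordinates of the traceless part. -/
noncomputable def vOf (X : Matrix (Fin 2) (Fin 2) ℝ) : Fin 3 → ℝ :=
  ![(X 0 0 - X 1 1) / 2, X 0 1, X 1 0]

lemma mat_decomp (X : Matrix (Fin 2) (Fin 2) ℝ) :
    X = (X.trace / 2) • (1 : Matrix (Fin 2) (Fin 2) ℝ) + mOf (vOf X) := by
  ext i j; fin_cases i <;> fin_cases j <;> simp [mOf, vOf, Matrix.trace_fin_two] <;> ring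

lemma vOf_add (X Y : Matrix (Fin 2) (Fin 2) ℝ) : vOf (X + Y) = vOf X + vOf Y := by
  ext i; fin_cases i <;> simp [vOf]; ring

lemma vOf_smul (c : ℝ) (X : Matrix (Fin 2) (Fin 2) ℝ) : vOf (c • X) = c • vOf X := by
  ext i; fin_cases i <;> simp [vOf]; ring

lemma vOf_one : vOf 1 = 0 := by
  ext i; fin_cases i <;> simp [vOf]

lemma vOf_mOf (v : Fin 3 → ℝ) : vOf (mOf v) = v := by
  ext i; fin_cases i <;> simp [vOf, mOf]

lemma mOf_trace (v : Fin 3 → ℝ) : (mOf v).trace = 0 := by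
  simp [mOf, Matrix.trace_fin_two]

lemma mOf_add (v w : Fin 3 → ℝ) : mOf (v + w) = mOf v + mOf w := by
  ext i j; fin_cases i <;> fin_cases j <;> simp [mOf]; ring

lemma mOf_smul (c : ℝ) (v : Fin 3 → ℝ) : mOf (c • v) = c • mOf v := by
  ext i j; fin_cases i <;> fin_cases j <;> simp [mOf]

lemma mOf_zero : mOf 0 = 0 := by
  ext i j; fin_cases i <;> fin_cases j <;> simp [mOf]

lemma mOf_mul (v w : Fin 3 → ℝ) :
    mOf v * mOf w = ((v ⬝ᵥ Jm *ᵥ w) / 2) • (1 : Matrix (Fin 2) (Fin 2) ℝ)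
      + mOf (Km *ᵥ (crossProduct v w)) := by
  ext i j; fin_cases i <;> fin_cases j <;>
    simp [mOf, Jm, Km, Matrix.mul_apply, Matrix.mulVec, dotProduct, Fin.sum_univ_three,
      Fin.sum_univ_two, cross_apply] <;> ring

lemma cross_T (T : Matrix (Fin 3) (Fin 3) ℝ) (v w : Fin 3 → ℝ) :
    Tᵀ *ᵥ (crossProduct (T *ᵥ v) (T *ᵥ w)) = T.det • crossProduct v w := by
  ext i; fin_cases i <;>
    simp [Matrix.mulVec, dotProduct, Fin.sum_univ_three, cross_apply, Matrix.det_fin_three] <;> ring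

/-- Extension of a linear map on traceless matrices to all matrices. -/
noncomputable def extL (T : Matrix (Fin 3) (Fin 3) ℝ) :
    Matrix (Fin 2) (Fin 2) ℝ →ₗ[ℝ] Matrix (Fin 2) (Fin 2) ℝ where
  toFun X := (X.trace / 2) • (1 : Matrix (Fin 2) (Fin 2) ℝ) + mOf (T *ᵥ vOf X)
  map_add' X Y := by
    rw [vOf_add, Matrix.mulVec_add, mOf_add, Matrix.trace_add, add_div, add_smul]; abel
  map_smul' c X := by
    rw [vOf_smul, Matrix.mulVec_smul, mOf_smul, Matrix.trace_smul, RingHom.id_apply, smul_add,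
      smul_smul, smul_eq_mul, mul_div_assoc]

lemma extL_apply (T : Matrix (Fin 3) (Fin 3) ℝ) (X) :
    extL T X = (X.trace / 2) • (1 : Matrix (Fin 2) (Fin 2) ℝ) + mOf (T *ᵥ vOf X) := rfl

lemma extL_one (T : Matrix (Fin 3) (Fin 3) ℝ) : extL T 1 = 1 := by
  rw [extL_apply, vOf_one]; simp [mOf_zero]

lemma extL_mOf (T : Matrix (Fin 3) (Fin 3) ℝ) (v) : extL T (mOf v) = mOf (T *ᵥ v) := by
  rw [extL_apply, mOf_trace, vOf_mOf]; simp

lemma extL_mul (T : Matrix (Fin 3) (Fin 3) ℝ) (hT : Tᵀ * Jm * T = Jm) (hd : T.det = 1)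
    (X Y : Matrix (Fin 2) (Fin 2) ℝ) : extL T (X * Y) = extL T X * extL T Y := by
  have hTK : T * Km * Tᵀ = Km := by
    have h1 : (Km * Tᵀ * Jm) * T = 1 := by
      rw [Matrix.mul_assoc, Matrix.mul_assoc, ← Matrix.mul_assoc Tᵀ, hT, Km_Jm]
    have h2 : T * (Km * Tᵀ * Jm) = 1 := mul_eq_one_comm.mp h1
    calc T * Km * Tᵀ = (T * (Km * Tᵀ * Jm)) * Km := by
          simp only [Matrix.mul_assoc, Jm_Km, Matrix.mul_one]
      _ = Km := by rw [h2, Matrix.one_mul]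
  have key : ∀ v w, extL T (mOf v * mOf w) = mOf (T *ᵥ v) * mOf (T *ᵥ w) := by
    intro v w
    rw [mOf_mul, mOf_mul, map_add, map_smul, extL_one, extL_mOf]
    refine congrArg₂ _ (congrArg₂ _ ?_ rfl) ?_
    · congr 1
      conv_lhs => rw [← hT]
      rw [← Matrix.mulVec_mulVec, ← Matrix.mulVec_mulVec, Matrix.dotProduct_mulVec,
        Matrix.vecMul_transpose]
    · congr 1
      have := cross_T T v w
      rw [hd, one_smul] at this
      rw [← this, Matrix.mulVec_mulVec, Matrix.mulVec_mulVec, hTK]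
  rw [mat_decomp X, mat_decomp Y]
  simp only [add_mul, mul_add, map_add, smul_mul_assoc, mul_smul_comm, one_mul, mul_one, map_smul,
    extL_one, extL_mOf, key]

lemma finish {T : Matrix (Fin 3) (Fin 3) ℝ} (hT : Tᵀ * Jm * T = Jm) (hd : T.det = 1) :
    ∃ g : GL (Fin 2) ℝ, ∀ A B : SL2R, T * adM A = adM B * T →
      ∃ c : ℝ, (c = 1 ∨ c = -1) ∧
        (g : Matrix (Fin 2) (Fin 2) ℝ) * (A : Matrix (Fin 2) (Fin 2) ℝ) *
          ((g⁻¹ : GL (Fin 2) ℝ) : Matrix (Fin 2) (Fin 2) ℝ) =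
          c • (B : Matrix (Fin 2) (Fin 2) ℝ) := by
  have hinj : Function.Injective (extL T) := by
    rw [← LinearMap.ker_eq_bot, LinearMap.ker_eq_bot']
    intro X hX
    have ht : X.trace = 0 := by
      have := congrArg Matrix.trace hX
      rw [extL_apply, Matrix.trace_add, mOf_trace, Matrix.trace_smul] at this
      simpa using this
    have hv : vOf X = 0 := by
      have h1 := congrArg vOf hX
      rw [extL_apply, ht, zero_div, zero_smul, zero_add, vOf_mOf] at h1
      have h2 : vOf 0 = 0 := by ext i; fin_cases i <;> simp [vOf]
      rw [h2] at h1
      by_contra h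
      have := Matrix.exists_mulVec_eq_zero_iff.mp ⟨_, h, h1⟩
      rw [hd] at this; exact one_ne_zero this
    rw [mat_decomp X, ht, hv, mOf_zero]; simp
  have hsurj : Function.Surjective (extL T) := LinearMap.injective_iff_surjective.mp hinj
  let Φ : Matrix (Fin 2) (Fin 2) ℝ →ₐ[ℝ] Matrix (Fin 2) (Fin 2) ℝ :=
    AlgHom.ofLinearMap (extL T) (extL_one T) (extL_mul T hT hd)
  obtain ⟨P, hP, h⟩ := skolem_mat (AlgEquiv.ofBijective Φ ⟨hinj, hsurj⟩)
  have h' : ∀ X, P * X = extL T X * P := h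
  let g : GL (Fin 2) ℝ := Matrix.nonsingInvUnit P hP
  have hg : (g : Matrix (Fin 2) (Fin 2) ℝ) = P := rfl
  have hgg : (g : Matrix (Fin 2) (Fin 2) ℝ) * ((g⁻¹ : GL (Fin 2) ℝ) : Matrix (Fin 2) (Fin 2) ℝ) = 1 := by
    rw [← Units.val_mul]; simp
  refine ⟨g, fun A B hAB => ?_⟩
  have hconj : (g : Matrix (Fin 2) (Fin 2) ℝ) * (A : Matrix (Fin 2) (Fin 2) ℝ) *
          ((g⁻¹ : GL (Fin 2) ℝ) : Matrix (Fin 2) (Fin 2) ℝ) = extL T A := by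
    rw [hg, h', ← hg, Matrix.mul_assoc, hgg, Matrix.mul_one]
  have hdet : (extL T A).det = 1 := by
    rw [← hconj, Matrix.det_mul, Matrix.det_mul, A.prop, mul_one, ← Matrix.det_mul, hgg]; simp
  have hAA : (A : Matrix (Fin 2) (Fin 2) ℝ).adjugate * (A : Matrix (Fin 2) (Fin 2) ℝ) = 1 := by
    rw [Matrix.adjugate_mul, A.prop, one_smul]
  have hAA' : (A : Matrix (Fin 2) (Fin 2) ℝ) * (A : Matrix (Fin 2) (Fin 2) ℝ).adjugate = 1 := by
    rw [Matrix.mul_adjugate, A.prop, one_smul]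
  have hBB : (B : Matrix (Fin 2) (Fin 2) ℝ).adjugate * (B : Matrix (Fin 2) (Fin 2) ℝ) = 1 := by
    rw [Matrix.adjugate_mul, B.prop, one_smul]
  have hBB' : (B : Matrix (Fin 2) (Fin 2) ℝ) * (B : Matrix (Fin 2) (Fin 2) ℝ).adjugate = 1 := by
    rw [Matrix.mul_adjugate, B.prop, one_smul]
  have heq : ∀ X, extL T (A * X * (A : Matrix (Fin 2) (Fin 2) ℝ).adjugate)
      = B * extL T X * (B : Matrix (Fin 2) (Fin 2) ℝ).adjugate := by
    intro X
    rw [mat_decomp X]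
    simp only [mul_add, add_mul, map_add, mul_smul_comm, smul_mul_assoc, mul_one, map_smul,
      extL_one, hAA', hBB', ← mOf_adM, extL_mOf, Matrix.mulVec_mulVec, hAB]
  set C := (B : Matrix (Fin 2) (Fin 2) ℝ).adjugate * extL T A with hC
  have hcomm : ∀ Y, C * Y = Y * C := by
    intro Y
    obtain ⟨X, rfl⟩ := hsurj Y
    have h1 : extL T A * extL T X = B * extL T X * (B : Matrix (Fin 2) (Fin 2) ℝ).adjugate * extL T A := by
      rw [← heq, ← extL_mul T hT hd, ← extL_mul T hT hd, Matrix.mul_assoc _ _ (A : Matrix (Fin 2) (Fin 2) ℝ), hAA, Matrix.mul_one]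
    rw [hC, Matrix.mul_assoc, h1]
    simp only [← Matrix.mul_assoc, hBB, Matrix.one_mul]
  obtain ⟨c, hc⟩ : ∃ c : ℝ, C = c • 1 := by
    obtain ⟨c, hc⟩ := Matrix.mem_range_scalar_of_commute_single (M := C) (fun i j _ => (hcomm _).symm)
    refine ⟨c, ?_⟩
    rw [← hc, Matrix.scalar_apply, Matrix.smul_one_eq_diagonal]
  have hBC : extL T A = c • (B : Matrix (Fin 2) (Fin 2) ℝ) := by
    have : (B : Matrix (Fin 2) (Fin 2) ℝ) * C = extL T A := by
      rw [hC, ← Matrix.mul_assoc, hBB', Matrix.one_mul]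
    rw [← this, hc]; simp
  refine ⟨c, ?_, hconj.trans hBC⟩
  rw [hBC, Matrix.det_smul, B.prop] at hdet
  simpa using hdet

lemma normalize_T {T : Matrix (Fin 3) (Fin 3) ℝ} (hT : IsUnit T.det) {μ : ℝ}
    (h : Tᵀ * Jm * T = μ • Jm) :
    ∃ k : ℝ, (k • T)ᵀ * Jm * (k • T) = Jm ∧ (k • T).det = 1 := by
  have hT0 : T.det ≠ 0 := hT.ne_zero
  have hJ : Jm.det = -2 := by simp [Jm, Matrix.det_fin_three]
  have hμ : T.det ^ 2 = μ ^ 3 := by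
    have := congrArg Matrix.det h
    rw [Matrix.det_mul, Matrix.det_mul, Matrix.det_transpose, Matrix.det_smul, hJ] at this
    simp at this
    linarith
  have hμpos : 0 < μ := by
    by_contra hle
    have h1 : 0 < T.det ^ 2 := by positivity
    have : μ ^ 3 ≤ 0 := by
      have := sq_nonneg μ
      nlinarith
    linarith
  -- `k = μ / det T`
  refine ⟨μ / T.det, ?_, ?_⟩
  · rw [Matrix.transpose_smul, Matrix.smul_mul, Matrix.smul_mul, Matrix.mul_smul, h, smul_smul,
      smul_smul]
    have : μ / T.det * (μ / T.det) * μ = 1 := by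
      field_simp; rw [hμ]
    rw [this, one_smul]
  · rw [Matrix.det_smul]
    simp only [Fintype.card_fin]
    field_simp; rw [hμ]


/-- If `ρ₁(Γ)` is non elementary and `|tr(ρ₁(γ))| = |tr(ρ₂(γ))|` for every `γ`, then `ρ₁` and
`ρ₂` are conjugate by an element of `PGL(2,ℝ)`, i.e. there is `g ∈ GL(2,ℝ)` such that for each
`γ`, conjugating any representative matrix of `ρ₁(γ)` by `g` gives, up to sign and up to a
positive scalar, a representative matrix of `ρ₂(γ)`. (The sign freedom is included in the
choice of the representative `B` of `ρ₂(γ)`, since `-B` represents the same class.) -/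
theorem conj_by_PGL_of_absTrace_eq {Γ : Type*} [Group Γ] (ρ₁ ρ₂ : Γ →* PSL2R)
    (h_nonelem : ¬ IsElementary ρ₁.range)
    (h_tr : ∀ γ : Γ, absTrace (ρ₁ γ) = absTrace (ρ₂ γ)) :
    ∃ g : GL (Fin 2) ℝ, ∀ γ : Γ, ∀ A : SL2R, (QuotientGroup.mk A : PSL2R) = ρ₁ γ →
      ∃ (B : SL2R) (c : ℝ), 0 < c ∧ (QuotientGroup.mk B : PSL2R) = ρ₂ γ ∧
        (g : Matrix (Fin 2) (Fin 2) ℝ) * (A : Matrix (Fin 2) (Fin 2) ℝ) *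
          ((g⁻¹ : GL (Fin 2) ℝ) : Matrix (Fin 2) (Fin 2) ℝ) =
          c • (B : Matrix (Fin 2) (Fin 2) ℝ) := by
  have hspan := burnside3 (adPSL.comp ρ₁) (irr_of_nonelem ρ₁ h_nonelem)
  obtain ⟨T, hT, hconj⟩ := conj_of_trace (adPSL.comp ρ₁) (adPSL.comp ρ₂) hspan (by
    intro γ
    simp only [MonoidHom.comp_apply, adPSL_trace, h_tr])
  simp only [MonoidHom.comp_apply] at hconj
  have hJ : ∀ x : PSL2R, (adPSL x)ᵀ * Jm * adPSL x = Jm := by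
    intro x
    obtain ⟨A, rfl⟩ := QuotientGroup.mk_surjective x
    rw [adPSL_mk, adM_J, A.prop]; simp
  -- `N` commutes with everything
  set N := Km * (Tᵀ * Jm * T) with hN
  have hNc : ∀ γ, N * adPSL (ρ₁ γ) = adPSL (ρ₁ γ) * N := by
    intro γ
    set a := adPSL (ρ₁ γ)
    set b := adPSL (ρ₂ γ)
    have h1 : aᵀ * (Tᵀ * Jm * T) * a = Tᵀ * Jm * T := by
      have e1 : aᵀ * Tᵀ = Tᵀ * bᵀ := by
        rw [← Matrix.transpose_mul, ← Matrix.transpose_mul, hconj]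
      calc aᵀ * (Tᵀ * Jm * T) * a = (aᵀ * Tᵀ) * Jm * (T * a) := by simp only [Matrix.mul_assoc]
        _ = Tᵀ * (bᵀ * Jm * b) * T := by rw [e1, hconj]; simp only [Matrix.mul_assoc]; rfl
        _ = _ := by rw [hJ]
    have h2 : a * (Km * aᵀ * Jm) = 1 := by
      apply mul_eq_one_comm.mp
      rw [Matrix.mul_assoc, Matrix.mul_assoc, ← Matrix.mul_assoc aᵀ, hJ, Km_Jm]
    have h3 : a * Km * aᵀ = Km := by
      calc a * Km * aᵀ = (a * (Km * aᵀ * Jm)) * Km := by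
            simp only [Matrix.mul_assoc, Jm_Km, Matrix.mul_one]
        _ = Km := by rw [h2, Matrix.one_mul]
    calc N * a = a * Km * aᵀ * (Tᵀ * Jm * T) * a := by rw [h3]
      _ = a * Km * (aᵀ * (Tᵀ * Jm * T) * a) := by simp only [Matrix.mul_assoc]
      _ = a * N := by rw [h1, hN, Matrix.mul_assoc]
  have hNall : ∀ X, N * X = X * N := by
    intro X
    have hX : X ∈ Submodule.span ℝ (Set.range (adPSL.comp ρ₁)) := by rw [hspan]; trivial
    induction hX using Submodule.span_induction with
    | mem x hx => obtain ⟨γ, rfl⟩ := hx; exact hNc γ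
    | zero => simp
    | add x y _ _ hx hy => rw [mul_add, add_mul, hx, hy]
    | smul c x _ hx => rw [mul_smul_comm, smul_mul_assoc, hx]
  obtain ⟨μ, hμ⟩ : ∃ μ : ℝ, Tᵀ * Jm * T = μ • Jm := by
    obtain ⟨c, hc⟩ := Matrix.mem_range_scalar_of_commute_single (M := N)
      (fun i j _ => (hNall _).symm)
    refine ⟨c, ?_⟩
    have h1 : Jm * N = Tᵀ * Jm * T := by
      rw [hN, ← Matrix.mul_assoc, Jm_Km, Matrix.one_mul]
    rw [← h1, ← hc, Matrix.scalar_apply, ← Matrix.smul_one_eq_diagonal]; simp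
  obtain ⟨k, hk1, hk2⟩ := normalize_T hT hμ
  obtain ⟨g, hg⟩ := finish hk1 hk2
  refine ⟨g, fun γ A hA => ?_⟩
  obtain ⟨B, hB⟩ := QuotientGroup.mk_surjective (ρ₂ γ)
  obtain ⟨c, hc, h⟩ := hg A B (by
    have := hconj γ
    rw [← hA, ← hB, adPSL_mk, adPSL_mk] at this
    rw [Matrix.smul_mul, Matrix.mul_smul, this])
  rcases hc with rfl | rfl
  · exact ⟨B, 1, one_pos, hB, h⟩
  · refine ⟨-B, 1, one_pos, (mk_neg B).trans hB, ?_⟩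
    rw [h]; simp
end
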